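/- For any β,γ ∈ ℝ with β²+γ² > 0 there exist constants c_{γ,β} > 0, λ > 0, M > 0 and ε₀ > 0 such that for every 0 < ε ≤ ε₀ there exist a real-analytic function Ψ_ε on S² and a real-analytic function F_ε : ℝ → ℝ satisfying ΔΨ_ε − 4γY₁⁰ = F_ε(Ψ_ε) on S², ‖βY₂⁰ + γY₁⁰ − Ψ_ε‖_{G_λ} ≤ Mε, and whose coefficients satisfy |⟨Ψ_ε,Y₆²⟩ + β²·(1/36)·(45/(11π√182))·c_{γ,β}·ε²| ≤ Mε³ and |⟨Ψ_ε,Y₄²⟩ + (1/14)·((3√3/(154π))(11γ² − 5β²) − β²·(1/(7π))·(30γ²/(7γ²+15β²)))·c_{γ,β}·ε²| ≤ Mε³. In particular Ψ_ε is non-zonal and is not of the form (zonal function) + (element of span{Y₂^m : |m| ≤ 2}). -/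

import Mathlib

open MeasureTheory
open scoped ENNReal

noncomputable section

/-- Functions on the unit sphere, represented in colatitude-longitude coordinates `(θ, φ)`. -/
abbrev SphereFun : Type := ℝ → ℝ → ℝ

/-- The `L²` inner product on the sphere:
`⟨u,v⟩ = ∫₀^{2π} ∫₀^π u v sin θ dθ dφ`. -/
def sInner (u v : SphereFun) : ℝ :=
  ∫ φ in (0:ℝ)..(2*Real.pi), ∫ θ in (0:ℝ)..Real.pi, u θ φ * v θ φ * Real.sin θ

/-- Legendre polynomials via Rodrigues' formula. -/
def legP (n : ℕ) (s : ℝ) : ℝ :=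
  (1 / ((2:ℝ)^n * (Nat.factorial n : ℝ))) * iteratedDeriv n (fun x : ℝ => (x^2 - 1)^n) s

/-- Associated Legendre functions `P_n^m`. -/
def assocLegP (n m : ℕ) (s : ℝ) : ℝ :=
  (-1 : ℝ)^m * (1 - s^2) ^ ((m : ℝ)/2) * iteratedDeriv m (legP n) s

/-- Real spherical harmonics `Y_n^m`. -/
def Ynm (n : ℕ) (m : ℤ) : SphereFun := fun θ φ =>
  if m = 0 then
    Real.sqrt ((2*(n:ℝ)+1)/(4*Real.pi)) * legP n (Real.cos θ)
  else if 0 < m then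
    (-1 : ℝ)^(m.natAbs) * Real.sqrt 2 *
      Real.sqrt ((2*(n:ℝ)+1)/(4*Real.pi) *
        ((Nat.factorial (n - m.natAbs) : ℝ) / (Nat.factorial (n + m.natAbs) : ℝ))) *
      assocLegP n m.natAbs (Real.cos θ) * Real.cos ((m.natAbs : ℝ) * φ)
  else
    (-1 : ℝ)^(m.natAbs) * Real.sqrt 2 *
      Real.sqrt ((2*(n:ℝ)+1)/(4*Real.pi) *
        ((Nat.factorial (n - m.natAbs) : ℝ) / (Nat.factorial (n + m.natAbs) : ℝ))) *
      assocLegP n m.natAbs (Real.cos θ) * Real.sin ((m.natAbs : ℝ) * φ)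

/-- The spherical-harmonic coefficient `u_n^m = ⟨u, Y_n^m⟩`. -/
def coeff (u : SphereFun) (n : ℕ) (m : ℤ) : ℝ := sInner u (Ynm n m)

/-- `μ_n = n(n+1) + 1`. -/
def muSp (n : ℕ) : ℝ := (n:ℝ)*((n:ℝ)+1)+1

/-- Squared (inhomogeneous) Sobolev norm `‖u‖²_{H^k} = Σ μ_n^k |u_n^m|²`. -/
def sobNormSq (k : ℕ) (u : SphereFun) : ℝ≥0∞ :=
  ∑' p : ℕ × ℤ, if |p.2| ≤ (p.1 : ℤ) then
    ENNReal.ofReal ((muSp p.1)^k * (coeff u p.1 p.2)^2) else 0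

/-- Squared homogeneous Sobolev norm `‖u‖²_{Ḣ^k} = Σ_{n ≥ 1} λ_n^k |u_n^m|²`. -/
def dotNormSq (k : ℕ) (u : SphereFun) : ℝ≥0∞ :=
  ∑' p : ℕ × ℤ, if 1 ≤ p.1 ∧ |p.2| ≤ (p.1 : ℤ) then
    ENNReal.ofReal (((p.1:ℝ)*((p.1:ℝ)+1))^k * (coeff u p.1 p.2)^2) else 0

/-- Squared Gevrey norm `‖u‖²_{G_λ} = Σ_{n ≥ 1} μ_n² e^{2λ√μ_n} |u_n^m|²`. -/
def gevNormSq (lam : ℝ) (u : SphereFun) : ℝ≥0∞ :=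
  ∑' p : ℕ × ℤ, if 1 ≤ p.1 ∧ |p.2| ≤ (p.1 : ℤ) then
    ENNReal.ofReal ((muSp p.1)^2 * Real.exp (2*lam*Real.sqrt (muSp p.1)) *
      (coeff u p.1 p.2)^2) else 0

/-- `∂_θ`. -/
def dTheta (u : SphereFun) : SphereFun := fun θ φ => deriv (fun t => u t φ) θ

/-- `∂_φ`. -/
def dPhi (u : SphereFun) : SphereFun := fun θ φ => deriv (fun p => u θ p) φ

/-- The Laplace–Beltrami operator in colatitude-longitude coordinates:
`Δu = (1/sinθ)∂_θ(sinθ ∂_θu) + (1/sin²θ)∂²_φu`. -/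
def lapS (u : SphereFun) : SphereFun := fun θ φ =>
  (1 / Real.sin θ) * deriv (fun t => Real.sin t * dTheta u t φ) θ
  + (1 / (Real.sin θ)^2) * dPhi (dPhi u) θ φ

/-- A zonal function: one depending only on the colatitude `θ`. -/
def Zonal (u : SphereFun) : Prop := ∀ (θ φ₁ φ₂ : ℝ), u θ φ₁ = u θ φ₂

/-- Zonal on the coordinate chart `θ ∈ [0, π]`. -/
def ZonalOn (u : SphereFun) : Prop :=
  ∀ θ ∈ Set.Icc (0:ℝ) Real.pi, ∀ (φ₁ φ₂ : ℝ), u θ φ₁ = u θ φ₂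

/-- `2π`-periodicity in the longitude. -/
def PeriodicPhi (u : SphereFun) : Prop := ∀ θ φ, u θ (φ + 2*Real.pi) = u θ φ

/-- The advection term `U·∇f` for the velocity `U = ∇⊥Ψ`, i.e.
`(1/sinθ)∂_φΨ ∂_θf − ∂_θΨ (1/sinθ)∂_φf`. -/
def advect (Ψ f : SphereFun) : SphereFun := fun θ φ =>
  (1 / Real.sin θ) * dPhi Ψ θ φ * dTheta f θ φ
  - dTheta Ψ θ φ * ((1 / Real.sin θ) * dPhi f θ φ)

/-- Smoothness in the coordinates. -/
def SphSmooth (u : SphereFun) : Prop := ContDiff ℝ (⊤ : ℕ∞) (Function.uncurry u)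

/-- A function is trivial if it is a zonal function plus an element of
`span{Y₂^m : |m| ≤ 2}`; non-triviality is the negation of this. -/
def SphNontrivial (u : SphereFun) : Prop :=
  ¬ ∃ (z : SphereFun) (c : ℤ → ℝ), Zonal z ∧
      ∀ θ ∈ Set.Icc (0:ℝ) Real.pi, ∀ φ : ℝ,
        u θ φ = z θ φ + ∑ m ∈ Finset.Icc (-2 : ℤ) 2, c m * Ynm 2 m θ φ

/-- Real analyticity on the sphere, characterized by membership in a Gevrey class. -/
def RealAnalyticSphere (u : SphereFun) : Prop := ∃ lam > 0, gevNormSq lam u < ⊤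


/-! ### The Banach algebra -/

def EA : Type := lp (fun _ : ℕ × ℕ => ℝ) 1

instance : NormedAddCommGroup EA := inferInstanceAs (NormedAddCommGroup (lp (fun _ : ℕ × ℕ => ℝ) 1))
instance : NormedSpace ℝ EA := inferInstanceAs (NormedSpace ℝ (lp (fun _ : ℕ × ℕ => ℝ) 1))
instance : CompleteSpace EA := inferInstanceAs (CompleteSpace (lp (fun _ : ℕ × ℕ => ℝ) 1))

namespace EA

def cf (a : EA) (p : ℕ × ℕ) : ℝ := (show lp (fun _ : ℕ × ℕ => ℝ) 1 from a) p

def e (p : ℕ × ℕ) : EA := (lp.single 1 p (1:ℝ) : lp (fun _ : ℕ × ℕ => ℝ) 1)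

theorem norm_e (p : ℕ × ℕ) : ‖e p‖ = 1 := by
  have := lp.norm_single (E := fun _ : ℕ × ℕ => ℝ) (p := 1) (by norm_num) p (1:ℝ)
  rw [norm_one] at this
  exact this

theorem hasSum_norm (a : EA) : HasSum (fun p => |cf a p|) ‖a‖ := by
  have := lp.hasSum_norm (E := fun _ : ℕ × ℕ => ℝ) (p := 1) (by simp) a
  simp only [ENNReal.toReal_one, Real.rpow_one] at this
  exact this

theorem summable_cf (a : EA) : Summable (fun p => |cf a p|) := (hasSum_norm a).summable

theorem hasSum_e (a : EA) : HasSum (fun p => cf a p • e p) a := by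
  have := lp.hasSum_single (E := fun _ : ℕ × ℕ => ℝ) (p := 1) (by simp) a
  have h : (fun p => cf a p • e p) = fun p =>
      (lp.single 1 p ((show lp (fun _ : ℕ × ℕ => ℝ) 1 from a) p) :
        lp (fun _ : ℕ × ℕ => ℝ) 1) := by
    funext p
    have h := lp.single_smul (E := fun _ : ℕ × ℕ => ℝ) (𝕜 := ℝ) 1 p
      ((show lp (fun _ : ℕ × ℕ => ℝ) 1 from a) p) (1:ℝ)
    rw [smul_eq_mul, mul_one] at h
    exact h.symm
  rw [h]
  exact this

theorem cf_add (a b : EA) (p) : cf (a + b) p = cf a p + cf b p := rfl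
theorem cf_smul (c : ℝ) (a : EA) (p) : cf (c • a) p = c * cf a p := rfl
theorem cf_e (p q : ℕ × ℕ) : cf (e p) q = if q = p then 1 else 0 := by
  by_cases h : q = p
  · subst h
    simp [cf, e]
  · simp [cf, e, h]

variable {X : Type*} [NormedAddCommGroup X] [NormedSpace ℝ X] [CompleteSpace X]

theorem summable_lift (x : ℕ × ℕ → X) (C : ℝ) (h : ∀ p, ‖x p‖ ≤ C) (a : EA) :
    Summable (fun p => cf a p • x p) := by
  refine Summable.of_norm_bounded (g := fun p => C * |cf a p|) ((summable_cf a).mul_left C) ?_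
  intro p
  rw [norm_smul, mul_comm, Real.norm_eq_abs]
  exact mul_le_mul_of_nonneg_right (h p) (abs_nonneg _)

def lift (x : ℕ × ℕ → X) (C : ℝ) (h : ∀ p, ‖x p‖ ≤ C) : EA →L[ℝ] X :=
  LinearMap.mkContinuous
    { toFun := fun a => ∑' p, cf a p • x p
      map_add' := fun a b => by
        simp only [cf_add, add_smul]
        exact (summable_lift x C h a).tsum_add (summable_lift x C h b)
      map_smul' := fun c a => by
        simp only [cf_smul, mul_smul, RingHom.id_apply]
        exact (summable_lift x C h a).tsum_const_smul c } C (by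
    intro a
    refine tsum_of_norm_bounded ((hasSum_norm a).mul_left C) ?_
    intro p
    rw [norm_smul, mul_comm, Real.norm_eq_abs]
    exact mul_le_mul_of_nonneg_right (h p) (abs_nonneg _))

theorem lift_apply (x : ℕ × ℕ → X) (C : ℝ) (h : ∀ p, ‖x p‖ ≤ C) (a : EA) :
    lift x C h a = ∑' p, cf a p • x p := rfl

theorem lift_hasSum (x : ℕ × ℕ → X) (C : ℝ) (h : ∀ p, ‖x p‖ ≤ C) (a : EA) :
    HasSum (fun p => cf a p • x p) (lift x C h a) := (summable_lift x C h a).hasSum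

theorem lift_norm_le (x : ℕ × ℕ → X) (C : ℝ) (h : ∀ p, ‖x p‖ ≤ C) : ‖lift x C h‖ ≤ C :=
  LinearMap.mkContinuous_norm_le _ ((norm_nonneg _).trans (h (0,0))) _

@[simp] theorem lift_e (x : ℕ × ℕ → X) (C : ℝ) (h : ∀ p, ‖x p‖ ≤ C) (p : ℕ × ℕ) :
    lift x C h (e p) = x p := by
  rw [lift_apply, tsum_eq_single p]
  · simp [cf_e]
  · intro q hq; simp [cf_e, hq]

theorem ext_e {f g : EA →L[ℝ] X} (h : ∀ p, f (e p) = g (e p)) : f = g := by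
  ext a
  have hf := f.hasSum (hasSum_e a)
  have hg := g.hasSum (hasSum_e a)
  have : (fun p => f (cf a p • e p)) = fun p => g (cf a p • e p) := by
    funext p; simp [h p]
  rw [this] at hf
  exact hf.unique hg

def conv : EA →L[ℝ] EA →L[ℝ] EA :=
  lift (fun p => lift (fun q => e (p + q)) 1 (fun q => (norm_e _).le)) 1
    (fun p => lift_norm_le _ _ _)

@[simp] theorem conv_e (p q) : conv (e p) (e q) = e (p + q) := by simp [conv]

theorem conv_comm (a b : EA) : conv a b = conv b a := by
  have : conv = conv.flip := by
    apply ext_e; intro p; apply ext_e; intro q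
    simp [add_comm]
  conv_lhs => rw [this]
  rfl

theorem conv_assoc (a b c : EA) : conv (conv a b) c = conv a (conv b c) := by
  have h1 : ∀ p q r, conv (conv (e p) (e q)) (e r) = conv (e p) (conv (e q) (e r)) := by
    intro p q r; simp [add_assoc]
  have h2 : ∀ p q, conv (conv (e p) (e q)) c = conv (e p) (conv (e q) c) := by
    intro p q
    have : conv (conv (e p) (e q)) = (conv (e p)).comp (conv (e q)) := ext_e (h1 p q)
    rw [this]; rfl
  have h3 : ∀ p, conv (conv (e p) b) c = conv (e p) (conv b c) := by
    intro p
    have : (conv.flip c).comp (conv (e p)) = (conv (e p)).comp (conv.flip c) :=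
      ext_e (fun q => by simpa using h2 p q)
    have := congrArg (fun f => f b) this
    simpa using this
  have : (conv.flip c).comp (conv.flip b) = conv.flip (conv b c) :=
      ext_e (fun q => by simpa using h3 q)
  have := congrArg (fun f => f a) this
  simpa using this

theorem one_conv (a : EA) : conv (e 0) a = a := by
  have : conv (e 0) = ContinuousLinearMap.id ℝ EA := ext_e (fun q => by simp)
  rw [this]; rfl

theorem norm_conv (a b : EA) : ‖conv a b‖ ≤ ‖a‖ * ‖b‖ := by
  have h : ‖conv‖ ≤ 1 := lift_norm_le _ _ _
  calc ‖conv a b‖ ≤ ‖conv‖ * ‖a‖ * ‖b‖ := conv.le_opNorm₂ a b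
    _ ≤ 1 * ‖a‖ * ‖b‖ := by gcongr
    _ = _ := by ring

instance : Mul EA := ⟨fun a b => conv a b⟩
instance : One EA := ⟨e 0⟩
theorem mul_def (a b : EA) : a * b = conv a b := rfl
theorem one_def : (1 : EA) = e 0 := rfl

instance : CommRing EA :=
  { (inferInstance : AddCommGroup EA) with
    mul := (· * ·)
    one := 1
    mul_assoc := conv_assoc
    one_mul := one_conv
    mul_one := fun a => (conv_comm a (e 0)).trans (one_conv a)
    left_distrib := fun a b c => (conv a).map_add b c
    right_distrib := fun a b c => by simp [mul_def]
    zero_mul := fun a => by simp [mul_def]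
    mul_zero := fun a => by simp [mul_def]
    mul_comm := conv_comm }

instance : NormedCommRing EA :=
  { (inferInstance : CommRing EA), (inferInstance : NormedAddCommGroup EA) with
    norm_mul_le := norm_conv }

instance : Algebra ℝ EA := Algebra.ofModule
  (fun r a b => by simp [mul_def]) (fun r a b => by simp [mul_def])

instance : NormedAlgebra ℝ EA := { norm_smul_le := norm_smul_le }

theorem e_mul (p q) : e p * e q = e (p + q) := conv_e p q

theorem e_pow (p : ℕ × ℕ) (k : ℕ) : (e p)^k = e (k • p) := by
  induction k with
  | zero => simp [one_def]
  | succ k ih => rw [pow_succ, ih, e_mul, succ_nsmul]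

/-- algebra hom from multiplicative family -/
theorem lift_mul (x : ℕ × ℕ → ℝ) (C : ℝ) (h : ∀ p, ‖x p‖ ≤ C)
    (hm : ∀ p q, x (p + q) = x p * x q) (a b : EA) :
    lift x C h (a * b) = lift x C h a * lift x C h b := by
  set L := lift x C h
  have h2 : ∀ p, L (conv (e p) b) = L (e p) * L b := by
    intro p
    have : L.comp (conv (e p)) = (L (e p)) • L := ext_e (fun q => by simp [L, hm])
    have := congrArg (fun f => f b) this
    simpa using this
  have : L.comp (conv.flip b) = (L b) • L :=
    ext_e (fun q => by
      have := h2 q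
      simp only [ContinuousLinearMap.comp_apply, ContinuousLinearMap.flip_apply,
        smul_apply, smul_eq_mul]
      rw [this, mul_comm])
  have := congrArg (fun f => f a) this
  simp only [ContinuousLinearMap.comp_apply, ContinuousLinearMap.flip_apply,
        smul_apply, smul_eq_mul] at this
  rw [mul_def, this, mul_comm]

end EA


/-! ### Term by term calculus -/

namespace EA

theorem bd0 {x : ℝ} (hx : |x| ≤ 1/64) (i : ℕ) : |x^i| ≤ 1 := by
  rw [abs_pow]; exact pow_le_one₀ (abs_nonneg _) (hx.trans (by norm_num))

theorem bd1 {x : ℝ} (hx : |x| ≤ 1/64) (i : ℕ) : |(i:ℝ) * x^(i-1)| ≤ 1 := by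
  rcases i with _ | k
  · simp
  · simp only [Nat.add_sub_cancel]
    rw [abs_mul, abs_pow, Nat.abs_cast]
    have h1 : |x|^k ≤ (1/64)^k := pow_le_pow_left₀ (abs_nonneg _) hx k
    have h2 : ((k+1:ℕ):ℝ) ≤ 2^k := by
      have := Nat.lt_two_pow_self (n := k)
      exact_mod_cast this
    calc ((k+1:ℕ):ℝ) * |x|^k ≤ 2^k * (1/64)^k := by gcongr
      _ = (1/32)^k := by rw [← mul_pow]; norm_num
      _ ≤ 1 := pow_le_one₀ (by norm_num) (by norm_num)

theorem bd2 {x : ℝ} (hx : |x| ≤ 1/64) (i : ℕ) :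
    |(i:ℝ) * (((i-1:ℕ):ℝ) * x^(i-1-1))| ≤ 2 := by
  rcases i with _ | _ | k
  · simp
  · simp
  · simp only [Nat.add_sub_cancel]
    rw [abs_mul, abs_mul, abs_pow, Nat.abs_cast, Nat.abs_cast]
    have h1 : |x|^k ≤ (1/64)^k := pow_le_pow_left₀ (abs_nonneg _) hx k
    have h0 := Nat.lt_two_pow_self (n := k)
    have h2 : ((k+1:ℕ):ℝ) ≤ 2^k := by exact_mod_cast h0
    have h3 : ((k+1+1:ℕ):ℝ) ≤ 2*2^k := by
      have : k+1+1 ≤ 2 * 2^k := by omega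
      exact_mod_cast this
    calc ((k+1+1:ℕ):ℝ) * (((k+1:ℕ):ℝ) * |x|^k) ≤ (2*2^k) * (2^k * (1/64)^k) := by gcongr
      _ = 2 * (1/16)^k := by rw [mul_assoc, ← mul_pow, ← mul_pow]; norm_num
      _ ≤ 2 * 1 := by gcongr; exact pow_le_one₀ (by norm_num) (by norm_num)
      _ = 2 := by norm_num

theorem abs_mul3 {a b c x y z : ℝ} (ha : |a| ≤ x) (hb : |b| ≤ y) (hc : |c| ≤ z) :
    |a * b * c| ≤ x * y * z := by
  rw [abs_mul, abs_mul]
  have := abs_nonneg a; have := abs_nonneg b; have := abs_nonneg c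
  gcongr
  · exact mul_nonneg (by linarith) (by linarith)
  · linarith

def D1 (A B A1 B1 : ℝ → ℝ) (p : ℕ × ℕ) (t : ℝ) : ℝ :=
  (p.1 * A t^(p.1-1)) * A1 t * B t^p.2 + A t^p.1 * (p.2 * B t^(p.2-1)) * B1 t

def D2 (A B A1 B1 A2 B2 : ℝ → ℝ) (p : ℕ × ℕ) (t : ℝ) : ℝ :=
  ((p.1:ℝ) * (((p.1-1:ℕ):ℝ) * A t^(p.1-1-1))) * (A1 t)^2 * B t^p.2
  + (p.1 * A t^(p.1-1)) * A2 t * B t^p.2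
  + 2 * ((p.1 * A t^(p.1-1)) * A1 t * (p.2 * B t^(p.2-1)) * B1 t)
  + A t^p.1 * ((p.2:ℝ) * (((p.2-1:ℕ):ℝ) * B t^(p.2-1-1))) * (B1 t)^2
  + A t^p.1 * (p.2 * B t^(p.2-1)) * B2 t

structure Adm (A B A1 B1 A2 B2 : ℝ → ℝ) : Prop where
  hA : ∀ t, HasDerivAt A (A1 t) t
  hB : ∀ t, HasDerivAt B (B1 t) t
  hA1 : ∀ t, HasDerivAt A1 (A2 t) t
  hB1 : ∀ t, HasDerivAt B1 (B2 t) t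
  bA : ∀ t, |A t| ≤ 1/64
  bB : ∀ t, |B t| ≤ 1/64
  bA1 : ∀ t, |A1 t| ≤ 1
  bB1 : ∀ t, |B1 t| ≤ 1
  bA2 : ∀ t, |A2 t| ≤ 1
  bB2 : ∀ t, |B2 t| ≤ 1

theorem Adm.d1 {A B A1 B1 A2 B2 : ℝ → ℝ} (H : Adm A B A1 B1 A2 B2)
    (p) (t) : HasDerivAt (fun t => A t^p.1 * B t^p.2) (D1 A B A1 B1 p t) t := by
  have := ((H.hA t).fun_pow p.1).fun_mul ((H.hB t).fun_pow p.2)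
  refine this.congr_deriv ?_
  simp only [D1]; ring

theorem Adm.d2 {A B A1 B1 A2 B2 : ℝ → ℝ} (H : Adm A B A1 B1 A2 B2)
    (p) (t) : HasDerivAt (D1 A B A1 B1 p) (D2 A B A1 B1 A2 B2 p t) t := by
  have h1 := (((((H.hA t).fun_pow (p.1-1)).const_mul (p.1:ℝ)).fun_mul (H.hA1 t)).fun_mul
    ((H.hB t).fun_pow p.2)).fun_add (((H.hA t).fun_pow p.1).fun_mul
    (((H.hB t).fun_pow (p.2-1)).const_mul (p.2:ℝ)) |>.fun_mul (H.hB1 t))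
  refine h1.congr_deriv ?_
  simp only [D2]; ring

theorem Adm.b0 {A B A1 B1 A2 B2 : ℝ → ℝ} (H : Adm A B A1 B1 A2 B2)
    (p : ℕ × ℕ) (t) : |A t^p.1 * B t^p.2| ≤ 1 := by
  rw [abs_mul]
  have h1 := bd0 (H.bA t) p.1
  have h2 := bd0 (H.bB t) p.2
  exact mul_le_one₀ h1 (abs_nonneg _) h2

theorem Adm.b1 {A B A1 B1 A2 B2 : ℝ → ℝ} (H : Adm A B A1 B1 A2 B2)
    (p) (t) : |D1 A B A1 B1 p t| ≤ 2 := by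
  have h1 := abs_mul3 (bd1 (H.bA t) p.1) (H.bA1 t) (bd0 (H.bB t) p.2)
  have h2 := abs_mul3 (bd0 (H.bA t) p.1) (bd1 (H.bB t) p.2) (H.bB1 t)
  unfold D1
  refine (abs_add_le _ _).trans ?_
  linarith

theorem Adm.b2 {A B A1 B1 A2 B2 : ℝ → ℝ} (H : Adm A B A1 B1 A2 B2)
    (p) (t) : |D2 A B A1 B1 A2 B2 p t| ≤ 8 := by
  have sA : |(A1 t)^2| ≤ 1 := by rw [abs_pow]; exact pow_le_one₀ (abs_nonneg _) (H.bA1 t)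
  have sB : |(B1 t)^2| ≤ 1 := by rw [abs_pow]; exact pow_le_one₀ (abs_nonneg _) (H.bB1 t)
  have h1 := abs_mul3 (bd2 (H.bA t) p.1) sA (bd0 (H.bB t) p.2)
  have h2 := abs_mul3 (bd1 (H.bA t) p.1) (H.bA2 t) (bd0 (H.bB t) p.2)
  have h3 : |2 * ((p.1 * A t^(p.1-1)) * A1 t * (p.2 * B t^(p.2-1)) * B1 t)| ≤ 2 := by
    have := abs_mul3 (bd1 (H.bA t) p.1) (H.bA1 t) (bd1 (H.bB t) p.2)
    rw [abs_mul, abs_mul]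
    have h4 := H.bB1 t
    have h5 := abs_nonneg (B1 t)
    have h6 : |p.1 * A t^(p.1-1) * A1 t * (p.2 * B t^(p.2-1))| * |B1 t| ≤ 1 :=
      mul_le_one₀ (by linarith) h5 h4
    rw [abs_two]; linarith
  have h4 := abs_mul3 (bd0 (H.bA t) p.1) (bd2 (H.bB t) p.2) sB
  have h5 := abs_mul3 (bd0 (H.bA t) p.1) (bd1 (H.bB t) p.2) (H.bB2 t)
  unfold D2
  refine (abs_add_le _ _).trans ?_
  refine (add_le_add_left (abs_add_le _ _) _).trans ?_
  refine (add_le_add_left (add_le_add_left (abs_add_le _ _) _) _).trans ?_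
  refine (add_le_add_left (add_le_add_left (add_le_add_left (abs_add_le _ _) _) _) _).trans ?_
  linarith

theorem Adm.s1 {A B A1 B1 A2 B2 : ℝ → ℝ} (H : Adm A B A1 B1 A2 B2)
    (a : EA) (t : ℝ) :
    HasDerivAt (fun t => ∑' p, cf a p * (A t^p.1 * B t^p.2)) (∑' p, cf a p * D1 A B A1 B1 p t) t := by
  refine hasDerivAt_tsum (𝕜 := ℝ) (F := ℝ) (u := fun p => |cf a p| * 2)
    (g := fun p t => cf a p * (A t^p.1 * B t^p.2)) (g' := fun p t => cf a p * D1 A B A1 B1 p t) ((summable_cf a).mul_right 2) ?_ ?_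
    (y₀ := t) ?_ t
  · intro p y; exact (H.d1 p y).const_mul _
  · intro p y; rw [Real.norm_eq_abs, abs_mul]; exact mul_le_mul_of_nonneg_left (H.b1 p y) (abs_nonneg _)
  · exact summable_lift (fun p => A t^p.1 * B t^p.2) 1 (fun p => H.b0 p t) a

theorem Adm.s2 {A B A1 B1 A2 B2 : ℝ → ℝ} (H : Adm A B A1 B1 A2 B2)
    (a : EA) (t : ℝ) :
    HasDerivAt (fun t => ∑' p, cf a p * D1 A B A1 B1 p t)
      (∑' p, cf a p * D2 A B A1 B1 A2 B2 p t) t := by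
  refine hasDerivAt_tsum (𝕜 := ℝ) (F := ℝ) (u := fun p => |cf a p| * 8)
    (g := fun p t => cf a p * D1 A B A1 B1 p t) (g' := fun p t => cf a p * D2 A B A1 B1 A2 B2 p t) ((summable_cf a).mul_right 8) ?_ ?_
    (y₀ := t) ?_ t
  · intro p y; exact (H.d2 p y).const_mul _
  · intro p y; rw [Real.norm_eq_abs, abs_mul]; exact mul_le_mul_of_nonneg_left (H.b2 p y) (abs_nonneg _)
  · exact summable_lift (fun p => D1 A B A1 B1 p t) 2 (fun p => H.b1 p t) a

theorem Adm.h1 {A B A1 B1 A2 B2 : ℝ → ℝ} (H : Adm A B A1 B1 A2 B2)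
    (a : EA) (t : ℝ) :
    HasSum (fun p => cf a p * D1 A B A1 B1 p t) (∑' p, cf a p * D1 A B A1 B1 p t) :=
  (summable_lift (fun p => D1 A B A1 B1 p t) 2 (fun p => H.b1 p t) a).hasSum

theorem Adm.h2 {A B A1 B1 A2 B2 : ℝ → ℝ} (H : Adm A B A1 B1 A2 B2)
    (a : EA) (t : ℝ) :
    HasSum (fun p => cf a p * D2 A B A1 B1 A2 B2 p t) (∑' p, cf a p * D2 A B A1 B1 A2 B2 p t) :=
  (summable_lift (fun p => D2 A B A1 B1 A2 B2 p t) 8 (fun p => H.b2 p t) a).hasSum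

end EA
namespace EA

def mono (ε : ℝ) (p : ℕ × ℕ) (θ φ : ℝ) : ℝ :=
  (Real.cos θ / 64)^p.1 * (ε * (Real.sin θ)^2 * Real.cos (2*φ))^p.2

theorem habs3 {a b c : ℝ} (ha : |a| ≤ 1) (hb : |b| ≤ 1) (hc : |c| ≤ 1) : |a * b * c| ≤ 1 := by
  rw [abs_mul, abs_mul]
  exact mul_le_one₀ (mul_le_one₀ ha (abs_nonneg _) hb) (abs_nonneg _) hc

theorem habs2 {b c : ℝ} (hb : |b| ≤ 1) (hc : |c| ≤ 1) : |b * c| ≤ 1 := by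
  rw [abs_mul]
  exact mul_le_one₀ hb (abs_nonneg _) hc

theorem hsmall {ε C K x : ℝ} (hε : |ε| ≤ C) (hx : |x| ≤ 1) (hK : C ≤ K) : |ε * x| ≤ K := by
  rw [abs_mul]
  have := abs_nonneg x
  have := abs_nonneg ε
  nlinarith

theorem bS (θ : ℝ) : |Real.sin θ| ≤ 1 := Real.abs_sin_le_one θ
theorem bC (θ : ℝ) : |Real.cos θ| ≤ 1 := Real.abs_cos_le_one θ

theorem admTheta {ε : ℝ} (hε : |ε| ≤ 1/4096) (φ : ℝ) :
    Adm (fun θ => Real.cos θ / 64) (fun θ => ε * (Real.sin θ)^2 * Real.cos (2*φ))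
      (fun θ => -Real.sin θ / 64) (fun θ => ε * (2 * Real.sin θ * Real.cos θ) * Real.cos (2*φ))
      (fun θ => -Real.cos θ / 64)
      (fun θ => ε * (2 * ((Real.cos θ)^2 - (Real.sin θ)^2)) * Real.cos (2*φ)) := by
  refine ⟨?_, ?_, ?_, ?_, ?_, ?_, ?_, ?_, ?_, ?_⟩ <;> intro t
  · exact (Real.hasDerivAt_cos t).div_const 64
  · have := (((Real.hasDerivAt_sin t).fun_pow 2).const_mul ε).mul_const (Real.cos (2*φ))
    refine this.congr_deriv ?_
    norm_num
  · exact (Real.hasDerivAt_sin t).fun_neg.div_const 64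
  · have := (((((Real.hasDerivAt_sin t).const_mul 2).fun_mul (Real.hasDerivAt_cos t))).const_mul
      ε).mul_const (Real.cos (2*φ))
    refine this.congr_deriv ?_
    ring
  · rw [abs_div]; have := bC t; norm_num; linarith
  · rw [mul_assoc]
    refine hsmall hε (habs2 ?_ (bC _)) (by norm_num)
    rw [pow_two]; exact habs2 (bS _) (bS _)
  · rw [abs_div, abs_neg]; have := bS t; norm_num; linarith
  · have : ε * (2 * Real.sin t * Real.cos t) * Real.cos (2*φ)
      = ε * (Real.sin (2*t) * Real.cos (2*φ)) := by rw [Real.sin_two_mul]; ring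
    rw [this]
    exact hsmall hε (habs2 (bS _) (bC _)) (by norm_num)
  · rw [abs_div, abs_neg]; have := bC t; norm_num; linarith
  · have : ε * (2 * ((Real.cos t)^2 - (Real.sin t)^2)) * Real.cos (2*φ)
      = (2*ε) * (Real.cos (2*t) * Real.cos (2*φ)) := by rw [Real.cos_two_mul' t]; ring
    rw [this]
    refine hsmall (C := 2/4096) ?_ (habs2 (bC _) (bC _)) (by norm_num)
    rw [abs_mul, abs_two]; linarith

theorem admPhi {ε : ℝ} (hε : |ε| ≤ 1/4096) (θ : ℝ) :
    Adm (fun _ => Real.cos θ / 64) (fun φ => ε * (Real.sin θ)^2 * Real.cos (2*φ))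
      (fun _ => 0) (fun φ => ε * (Real.sin θ)^2 * (-2 * Real.sin (2*φ)))
      (fun _ => 0)
      (fun φ => ε * (Real.sin θ)^2 * (-4 * Real.cos (2*φ))) := by
  have d2 : ∀ t : ℝ, HasDerivAt (fun t : ℝ => 2*t) 2 t := fun t => by
    simpa using (hasDerivAt_id t).const_mul 2
  refine ⟨?_, ?_, ?_, ?_, ?_, ?_, ?_, ?_, ?_, ?_⟩ <;> intro t
  · exact hasDerivAt_const _ _
  · have := ((d2 t).cos).const_mul (ε * (Real.sin θ)^2)
    refine this.congr_deriv ?_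
    ring
  · exact hasDerivAt_const _ _
  · have := (((d2 t).sin).const_mul (-2)).const_mul (ε * (Real.sin θ)^2)
    refine this.congr_deriv ?_
    ring
  · rw [abs_div]; have := bC θ; norm_num; linarith
  · rw [mul_assoc]
    refine hsmall hε (habs2 ?_ (bC _)) (by norm_num)
    rw [pow_two]; exact habs2 (bS _) (bS _)
  · simp
  · have : ε * (Real.sin θ)^2 * (-2 * Real.sin (2*t))
      = (-2*ε) * (Real.sin θ * Real.sin θ * Real.sin (2*t)) := by ring
    rw [this]
    refine hsmall (C := 2/4096) ?_ (habs3 (bS _) (bS _) (bS _)) (by norm_num)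
    rw [abs_mul, abs_neg, abs_two]; linarith
  · simp
  · have : ε * (Real.sin θ)^2 * (-4 * Real.cos (2*t))
      = (4*ε) * (Real.sin θ * Real.sin θ * -Real.cos (2*t)) := by ring
    rw [this]
    refine hsmall (C := 4/4096) ?_ (habs3 (bS _) (bS _) (by rw [abs_neg]; exact bC _)) (by norm_num)
    rw [abs_mul]; norm_num; linarith

/-- the monomial Laplacian -/
def lapm (ε : ℝ) (p : ℕ × ℕ) (θ φ : ℝ) : ℝ :=
  (p.1:ℝ) * (p.1 - 1) / 4096 * mono ε (p.1 - 2, p.2) θ φ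
  + ε^2 * (4 * p.2 * (p.2 - 1)) * (mono ε (p.1, p.2-2) θ φ - 4096 * mono ε (p.1+2, p.2-2) θ φ)
  - ((p.1:ℝ) + 2 * p.2) * (p.1 + 2 * p.2 + 1) * mono ε p θ φ

def Fu (ε : ℝ) (a : EA) : SphereFun := fun θ φ => ∑' p, cf a p * mono ε p θ φ

theorem mono_bd {ε : ℝ} (hε : |ε| ≤ 1/4096) (p : ℕ × ℕ) (θ φ : ℝ) : ‖mono ε p θ φ‖ ≤ 1 :=
  (admTheta hε φ).b0 p θ

def ev (ε : ℝ) (hε : |ε| ≤ 1/4096) (θ φ : ℝ) : EA →L[ℝ] ℝ :=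
  lift (fun p => mono ε p θ φ) 1 (fun p => mono_bd hε p θ φ)

theorem ev_apply {ε : ℝ} (hε : |ε| ≤ 1/4096) (θ φ : ℝ) (a : EA) : ev ε hε θ φ a = Fu ε a θ φ := rfl

theorem ev_mul {ε : ℝ} (hε : |ε| ≤ 1/4096) (θ φ : ℝ) (a b : EA) :
    ev ε hε θ φ (a * b) = ev ε hε θ φ a * ev ε hε θ φ b := by
  refine lift_mul _ _ _ ?_ a b
  intro p q
  simp only [mono, Prod.fst_add, Prod.snd_add, pow_add]; ring

theorem ev_e {ε : ℝ} (hε : |ε| ≤ 1/4096) (θ φ : ℝ) (p) :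
    ev ε hε θ φ (e p) = mono ε p θ φ := lift_e _ _ _ _

theorem lapm_eq (ε : ℝ) (p : ℕ × ℕ) (θ φ : ℝ) (hs : Real.sin θ ≠ 0) :
    (1 / Real.sin θ) * (Real.cos θ * D1 (fun θ => Real.cos θ / 64) (fun θ => ε * (Real.sin θ)^2 * Real.cos (2*φ))
      (fun θ => -Real.sin θ / 64) (fun θ => ε * (2 * Real.sin θ * Real.cos θ) * Real.cos (2*φ)) p θ
     + Real.sin θ * D2 (fun θ => Real.cos θ / 64) (fun θ => ε * (Real.sin θ)^2 * Real.cos (2*φ))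
      (fun θ => -Real.sin θ / 64) (fun θ => ε * (2 * Real.sin θ * Real.cos θ) * Real.cos (2*φ))
      (fun θ => -Real.cos θ / 64)
      (fun θ => ε * (2 * ((Real.cos θ)^2 - (Real.sin θ)^2)) * Real.cos (2*φ)) p θ)
     + (1 / (Real.sin θ)^2) * D2 (fun _ => Real.cos θ / 64) (fun φ => ε * (Real.sin θ)^2 * Real.cos (2*φ))
      (fun _ => 0) (fun φ => ε * (Real.sin θ)^2 * (-2 * Real.sin (2*φ)))
      (fun _ => 0)
      (fun φ => ε * (Real.sin θ)^2 * (-4 * Real.cos (2*φ))) p φ = lapm ε p θ φ := by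
  obtain ⟨i, j⟩ := p
  have h2 : (Real.sin (2*φ))^2 = 1 - (Real.cos (2*φ))^2 := Real.sin_sq _
  have h1 : (Real.cos θ)^2 = 1 - (Real.sin θ)^2 := Real.cos_sq' _
  simp only [D1, D2, lapm, mono]
  have h3 : (Real.sin θ)^2 = 1 - (Real.cos θ)^2 := Real.sin_sq _
  generalize hc : Real.cos θ = c at *
  generalize hss : Real.sin θ = s at *
  generalize hC : Real.cos (2*φ) = C at *
  generalize hS : Real.sin (2*φ) = S at *
  trans (-2 * (i * (c/64)^(i-1)) * (c/64) * (ε*s^2*C)^j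
    + 2 * (c/64)^i * (j * (ε*s^2*C)^(j-1)) * ε * c^2 * C
    + ((i:ℝ) * (((i-1:ℕ):ℝ) * (c/64)^(i-1-1))) * s^2/4096 * (ε*s^2*C)^j
    - 2 * ((i * (c/64)^(i-1)) * (s^2/64) * (j * (ε*s^2*C)^(j-1)) * (2*ε*c*C))
    + (c/64)^i * ((j:ℝ) * (((j-1:ℕ):ℝ) * (ε*s^2*C)^(j-1-1))) * (4*ε^2*s^2*c^2*C^2)
    + (c/64)^i * (j * (ε*s^2*C)^(j-1)) * (2*ε*(c^2-s^2)*C)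
    + (c/64)^i * ((j:ℝ) * (((j-1:ℕ):ℝ) * (ε*s^2*C)^(j-1-1))) * (4*ε^2*s^2*S^2)
    - (c/64)^i * (j * (ε*s^2*C)^(j-1)) * (4*ε*C))
  · generalize (c/64)^(i-1-1) = X2
    generalize (c/64)^(i-1) = X1
    generalize (c/64)^i = X0
    generalize (ε*s^2*C)^(j-1-1) = Y2
    generalize (ε*s^2*C)^(j-1) = Y1
    generalize (ε*s^2*C)^j = Y0
    field_simp
    ring
  · rw [h3, h2]
    have hk : ∀ k:ℕ, k+1+1-2 = k := fun k => by omega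
    rcases i with _ | _ | k <;> rcases j with _ | _ | l <;>
      simp only [hk, Nat.add_sub_cancel, Nat.cast_zero, Nat.cast_add, Nat.cast_one, Nat.zero_add,
        Nat.sub_self, Nat.zero_sub, pow_zero] <;> ring

theorem lap_Fu {ε : ℝ} (hε : |ε| ≤ 1/4096) (a : EA) (θ φ : ℝ) (hs : Real.sin θ ≠ 0) :
    HasSum (fun p => cf a p * lapm ε p θ φ) (lapS (Fu ε a) θ φ) := by
  have hT := fun φ => admTheta hε φ
  have hP := admPhi hε θ
  have e1 : (fun t => dTheta (Fu ε a) t φ) = _ := funext fun t => ((hT φ).s1 a t).deriv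
  have e2 := (((Real.hasDerivAt_sin θ).fun_mul ((hT φ).s2 a θ))).deriv
  have e3 : (fun t => dPhi (Fu ε a) θ t) = _ := funext fun t => (hP.s1 a t).deriv
  have e4 := (hP.s2 a φ).deriv
  rw [← e3] at e4
  change dPhi (dPhi (Fu ε a)) θ φ = _ at e4
  have e6 : ∀ t, dTheta (Fu ε a) t φ = _ := fun t => congrFun e1 t
  simp only [← e6] at e2
  unfold lapS
  rw [e4, e2, e6]
  have k1 := (hT φ).h1 a θ
  have k2 := (hT φ).h2 a θ
  have k3 := hP.h2 a φ
  have := (((k1.mul_left (Real.cos θ)).add (k2.mul_left (Real.sin θ))).mul_left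
    (1 / Real.sin θ)).add (k3.mul_left (1 / (Real.sin θ)^2))
  refine HasSum.congr_fun this ?_
  intro p
  rw [← lapm_eq ε p θ φ hs]
  ring

/-! ### Operators -/

def dd (p : ℕ × ℕ) : ℝ := (6 - ((p.1:ℝ) + 2 * p.2) * (p.1 + 2 * p.2 + 1))⁻¹

theorem dd_bd (p : ℕ × ℕ) : |dd p| ≤ 1 := by
  obtain ⟨i, j⟩ := p
  unfold dd
  have key : ∀ d : ℕ, |(6 - (d:ℝ) * (d+1))⁻¹| ≤ 1 := by
    intro d
    rw [abs_inv]
    rcases d with _ | _ | _ | d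
    · norm_num
    · norm_num
    · norm_num
    · apply inv_le_one_of_one_le₀
      push_cast
      rw [abs_sub_comm, le_abs]
      left
      have : (0:ℝ) ≤ d := Nat.cast_nonneg d
      nlinarith
  have := key (i + 2 * j)
  push_cast at this
  exact this

theorem ddm_bd (p : ℕ × ℕ) (m : ℕ) (hm : m ≤ p.1 + 2 * p.2) : |(m:ℝ) * (m - 1) * dd p| ≤ 1 := by
  obtain ⟨i, j⟩ := p
  simp only at hm
  unfold dd
  have key : ∀ d : ℕ, m ≤ d → |(m:ℝ) * (m-1) * (6 - (d:ℝ) * (d+1))⁻¹| ≤ 1 := by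
    intro d hd
    rcases d with _ | _ | _ | d
    · have : m = 0 := by omega
      subst this; norm_num
    · have : m = 0 ∨ m = 1 := by omega
      rcases this with h | h <;> subst h <;> norm_num
    · norm_num
    · have h1 : (m:ℝ) ≤ d + 3 := by exact_mod_cast hd
      have h0 : (0:ℝ) ≤ d := Nat.cast_nonneg d
      have h2 : (0:ℝ) ≤ m := Nat.cast_nonneg m
      have h3 : (0:ℝ) ≤ (m:ℝ) * (m-1) := by
        rcases m with _ | m
        · simp
        · push_cast; rw [add_sub_cancel_right]; positivity
      push_cast
      have h4 : (6 - ((d:ℝ)+1+1+1) * (d+1+1+1+1)) < 0 := by nlinarith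
      rw [abs_mul, abs_of_nonneg h3, abs_inv, abs_of_neg h4, ← div_eq_mul_inv, div_le_one (by linarith)]
      nlinarith
  have := key (i + 2 * j) hm
  push_cast at this
  exact this

def Dv : EA →L[ℝ] EA := lift (fun p => dd p • e p) 1 (fun p => by
  rw [norm_smul, norm_e, mul_one]; exact dd_bd p)

def Pr : EA →L[ℝ] EA := lift (fun p => if p.1 + 2 * p.2 = 2 then 0 else e p) 1 (fun p => by
  split_ifs
  · simp
  · exact (norm_e p).le)

def K0 : EA →L[ℝ] EA := lift (fun p => ((p.1:ℝ) * (p.1 - 1) / 4096 * dd p) • e (p.1-2, p.2)) (1/2) (fun p => by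
  rw [norm_smul, norm_e, mul_one, Real.norm_eq_abs]
  have := ddm_bd p p.1 (by omega)
  rw [show (p.1:ℝ) * (p.1 - 1) / 4096 * dd p = ((p.1:ℝ) * (p.1 - 1) * dd p) * (1/4096) by ring, abs_mul]
  norm_num at this ⊢
  linarith)

def K1 : EA →L[ℝ] EA := lift
  (fun p => (4 * (p.2:ℝ) * (p.2 - 1) * dd p) • (e (p.1, p.2-2) - (4096:ℝ) • e (p.1+2, p.2-2)))
  4097 (fun p => by
  rw [norm_smul, Real.norm_eq_abs]
  have h1 := ddm_bd p (2 * p.2) (by omega)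
  have h2 : |4 * (p.2:ℝ) * (p.2 - 1) * dd p| ≤ 1 := by
    rcases Nat.eq_zero_or_pos p.2 with h | h
    · rw [h]; simp
    refine le_trans ?_ h1
    have h3 : (1:ℝ) ≤ p.2 := by exact_mod_cast h
    push_cast
    rw [abs_mul, abs_mul _ (dd p)]
    refine mul_le_mul_of_nonneg_right ?_ (abs_nonneg _)
    rw [abs_of_nonneg (by nlinarith), abs_of_nonneg (by nlinarith)]
    nlinarith
  have h3 : ‖e (p.1, p.2-2) - (4096:ℝ) • e (p.1+2, p.2-2)‖ ≤ 4097 := by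
    refine (norm_sub_le _ _).trans ?_
    rw [norm_smul, norm_e, norm_e]; norm_num
  calc _ ≤ 1 * (4097:ℝ) := by gcongr
    _ = 4097 := by norm_num)

theorem lapev_bd {ε : ℝ} (hε : |ε| ≤ 1/4096) (θ φ : ℝ) (hs : Real.sin θ ≠ 0) :
    ∃ C, ∀ p, ‖lapm ε p θ φ‖ ≤ C := by
  have hT := admTheta hε φ
  have hP := admPhi hε θ
  refine ⟨|1 / Real.sin θ| * (|Real.cos θ| * 2 + |Real.sin θ| * 8) + |1 / (Real.sin θ)^2| * 8, ?_⟩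
  intro p
  rw [← lapm_eq ε p θ φ hs, Real.norm_eq_abs]
  refine (abs_add_le _ _).trans ?_
  rw [abs_mul, abs_mul _ (D2 _ _ _ _ _ _ _ _)]
  gcongr
  · refine (abs_add_le _ _).trans ?_
    rw [abs_mul, abs_mul]
    gcongr
    · exact hT.b1 p θ
    · exact hT.b2 p θ
  · exact hP.b2 p φ

theorem lap_main {ε : ℝ} (hε : |ε| ≤ 1/4096) (a g : EA) (θ φ : ℝ) (hs : Real.sin θ ≠ 0) (c : ℝ) :
    lapS (Fu ε (a + c • Dv g)) θ φ + 6 * Fu ε (a + c • Dv g) θ φ =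
      lapS (Fu ε a) θ φ + 6 * Fu ε a θ φ + c * ev ε hε θ φ (Pr g + K0 g + ε^2 • K1 g) := by
  obtain ⟨C, hC⟩ := lapev_bd hε θ φ hs
  have h : ∀ b, lapS (Fu ε b) θ φ = lift (fun p => lapm ε p θ φ) C hC b := fun b =>
    (lap_Fu hε b θ φ hs).unique (lift_hasSum _ C hC b)
  rw [h, h, ← ev_apply hε, ← ev_apply hε]
  set LL := lift (fun p => lapm ε p θ φ) C hC
  have : (LL + (6:ℝ) • ev ε hε θ φ).comp Dv = (ev ε hε θ φ).comp (Pr + K0 + ε^2 • K1) := by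
    apply ext_e
    intro p
    simp only [ContinuousLinearMap.comp_apply, add_apply, smul_apply, Dv, Pr, K0, K1, lift_e, map_smul, map_add,
      map_sub, ev_e, LL, smul_eq_mul, lapm]
    by_cases hp : p.1 + 2 * p.2 = 2
    · have : dd p = 0 := by
        have h1 : ((p.1:ℝ) + 2 * p.2) = 2 := by exact_mod_cast hp
        simp [dd, h1]; norm_num
      rw [if_pos hp, this]; simp
    · have h0 : (6 - ((p.1:ℝ) + 2 * p.2) * (p.1 + 2 * p.2 + 1)) ≠ 0 := by
        intro h0
        have h1 : (((p.1:ℝ) + 2 * p.2) - 2) * (((p.1:ℝ) + 2 * p.2) + 3) = 0 := by linarith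
        rcases mul_eq_zero.1 h1 with h | h
        · apply hp
          have : (p.1:ℝ) + 2 * p.2 = 2 := by linarith
          exact_mod_cast this
        · have : (0:ℝ) ≤ (p.1:ℝ) + 2 * p.2 := by positivity
          linarith
      have h1 : dd p * (6 - ((p.1:ℝ) + 2 * p.2) * (p.1 + 2 * p.2 + 1)) = 1 := inv_mul_cancel₀ h0
      rw [if_neg hp, ev_e]
      linear_combination (mono ε p θ φ) * h1
  have := congrArg (fun f => f g) this
  simp only [ContinuousLinearMap.comp_apply, add_apply, smul_apply, smul_eq_mul] at this
  simp only [map_add, map_smul, smul_eq_mul] at this ⊢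
  linear_combination c * this

end EA


/-! ### Smoothness -/
namespace EA

theorem one_sub_inv {t : EA} (ht : ‖t‖ < 1) : Ring.inverse (1 - t) = ∑' k : ℕ, t^k := by
  have h1 := geom_series_mul_neg t ht
  have h2 : (1 - t) * ∑' k : ℕ, t^k = 1 := by rw [mul_comm]; exact h1
  have : (1 - t) = ((⟨1 - t, ∑' k : ℕ, t^k, h2, h1⟩ : EAˣ) : EA) := rfl
  rw [this, Ring.inverse_unit]; rfl

theorem cf_le (a : EA) (p) : |cf a p| ≤ ‖a‖ := by
  exact le_hasSum (hasSum_norm a) p (fun q _ => abs_nonneg _)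

def pair (a : EA) : EA →L[ℝ] ℝ := lift (fun p => cf a p) ‖a‖ (cf_le a)

theorem norm_smul_e {x : ℝ} (hx : |x| ≤ 1/64) (p) : ‖x • e p‖ < 1 := by
  rw [norm_smul, norm_e, mul_one, Real.norm_eq_abs]; linarith

theorem pair_geom (a : EA) {x y : ℝ} (hx : |x| ≤ 1/64) (hy : |y| ≤ 1/64) :
    pair a (Ring.inverse (1 - x • e (1,0)) * Ring.inverse (1 - y • e (0,1))) =
      ∑' p : ℕ × ℕ, cf a p * (x^p.1 * y^p.2) := by
  have n1 := norm_smul_e hx (1,0)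
  have n2 := norm_smul_e hy (0,1)
  rw [one_sub_inv n1, one_sub_inv n2]
  have s1 : Summable (fun k : ℕ => ‖(x • e (1,0))^k‖) := summable_norm_geometric_of_norm_lt_one n1
  have s2 : Summable (fun k : ℕ => ‖(y • e (0,1))^k‖) := summable_norm_geometric_of_norm_lt_one n2
  rw [tsum_mul_tsum_of_summable_norm s1 s2, (pair a).map_tsum (summable_mul_of_summable_norm s1 s2)]
  congr 1
  ext p
  rw [smul_pow, smul_pow, e_pow, e_pow, smul_mul_smul_comm, e_mul, map_smul, pair, lift_e]
  simp [mul_comm]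

theorem contDiff_Fu {ε : ℝ} (hε : |ε| ≤ 1/4096) (a : EA) : SphSmooth (Fu ε a) := by
  have key : Function.uncurry (Fu ε a) = fun q : ℝ × ℝ =>
      pair a (Ring.inverse (1 - (Real.cos q.1 / 64) • e (1,0)) *
        Ring.inverse (1 - (ε * (Real.sin q.1)^2 * Real.cos (2*q.2)) • e (0,1))) := by
    ext q
    rw [pair_geom a ((admTheta hε q.2).bA q.1) ((admTheta hε q.2).bB q.1)]
    rfl
  unfold SphSmooth
  rw [key]
  have inv : ∀ t : EA, ‖t‖ < 1 → ContDiffAt ℝ (⊤ : ℕ∞) Ring.inverse (1 - t) := by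
    intro t ht
    have : (1 - t) = ((Units.oneSub t ht : EAˣ) : EA) := rfl
    rw [this]
    exact contDiffAt_ringInverse ℝ _
  refine (pair a).contDiff.comp (ContDiff.mul ?_ ?_)
  · rw [contDiff_iff_contDiffAt]
    intro q
    refine ContDiffAt.comp (g := Ring.inverse) (f := fun q : ℝ × ℝ => 1 - (Real.cos q.1 / 64) • e (1,0)) q ?_ ?_
    · exact inv _ (norm_smul_e ((admTheta hε q.2).bA q.1) _)
    · apply ContDiff.contDiffAt; fun_prop
  · rw [contDiff_iff_contDiffAt]
    intro q
    refine ContDiffAt.comp (g := Ring.inverse)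
      (f := fun q : ℝ × ℝ => 1 - (ε * (Real.sin q.1)^2 * Real.cos (2*q.2)) • e (0,1)) q ?_ ?_
    · exact inv _ (norm_smul_e ((admTheta hε q.2).bB q.1) _)
    · apply ContDiff.contDiffAt; fun_prop

theorem periodic_Fu (ε : ℝ) (a : EA) : PeriodicPhi (Fu ε a) := by
  intro θ φ
  have : Real.cos (2 * (φ + 2 * Real.pi)) = Real.cos (2 * φ) := by
    rw [show 2 * (φ + 2 * Real.pi) = 2 * φ + (2:ℕ) * (2 * Real.pi) by push_cast; ring]
    exact Real.cos_add_nat_mul_two_pi _ _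
  simp only [Fu, mono, this]

end EA


/-! ### Legendre functions -/
section Leg
open Polynomial

def Rod (n : ℕ) : ℝ[X] := (X^2 - 1)^n
def Lq (n k : ℕ) : ℝ[X] := derivative^[n+k] (Rod n)

theorem iteratedDeriv_poly (p : ℝ[X]) (k : ℕ) :
    iteratedDeriv k (fun x => p.eval x) = fun x => (derivative^[k] p).eval x := by
  induction k with
  | zero => simp
  | succ k ih =>
    rw [iteratedDeriv_succ, ih, Function.iterate_succ_apply']
    ext x
    exact Polynomial.deriv _

theorem legP_eq (n : ℕ) : legP n = fun s => (C (1 / ((2:ℝ)^n * (Nat.factorial n : ℝ))) * Lq n 0).eval s := by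
  ext s
  have : (fun x : ℝ => (x^2 - 1)^n) = fun x => (Rod n).eval x := by
    ext x; simp [Rod]
  rw [legP, this, iteratedDeriv_poly]
  simp [Lq]

theorem legD_eq (n k : ℕ) (s : ℝ) : iteratedDeriv k (legP n) s =
    1 / ((2:ℝ)^n * (Nat.factorial n : ℝ)) * (Lq n k).eval s := by
  rw [legP_eq, iteratedDeriv_poly]
  simp only [iterate_derivative_C_mul, eval_mul, eval_C, Lq]
  rw [← Function.iterate_add_apply, add_zero, add_comm k n]

def Ycst (n k : ℕ) : ℝ := (if k = 0 then 1 else Real.sqrt 2) *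
      Real.sqrt ((2*(n:ℝ)+1)/(4*Real.pi) *
        ((Nat.factorial (n - k) : ℝ) / (Nat.factorial (n + k) : ℝ))) *
       (1 / ((2:ℝ)^n * (Nat.factorial n : ℝ)))

def Yang (m : ℤ) (φ : ℝ) : ℝ := if 0 ≤ m then Real.cos (m * φ) else Real.sin (m.natAbs * φ)

def Yth (n k : ℕ) (θ : ℝ) : ℝ := Ycst n k * |Real.sin θ|^k * (Lq n k).eval (Real.cos θ)

theorem sin_rpow (θ : ℝ) (k : ℕ) : (1 - (Real.cos θ)^2) ^ ((k : ℝ)/2) = |Real.sin θ|^k := by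
  rw [← Real.sin_sq, ← sq_abs, ← Real.rpow_natCast, ← Real.rpow_mul (abs_nonneg _),
    ← Real.rpow_natCast]
  congr 1
  push_cast; ring

theorem Ynm_eq (n : ℕ) (m : ℤ) (θ φ : ℝ) : Ynm n m θ φ = Yth n m.natAbs θ * Yang m φ := by
  unfold Ynm Yth Yang Ycst
  have hm1 : ((-1:ℝ)^m.natAbs) * ((-1)^m.natAbs) = 1 := by
    rw [← mul_pow]; norm_num
  by_cases h0 : m = 0
  · subst h0
    simp only [if_true, Int.natAbs_zero, le_refl, Int.cast_zero, zero_mul, Real.cos_zero, pow_zero,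
      Nat.sub_zero, Nat.add_zero]
    have := legD_eq n 0 (Real.cos θ)
    rw [iteratedDeriv_zero] at this
    rw [this, div_self (by positivity)]
    ring_nf
  · have hk : m.natAbs ≠ 0 := by omega
    rw [if_neg h0, if_neg hk]
    rcases lt_or_gt_of_ne h0 with h | h
    · rw [if_neg (by omega), if_neg (by omega), assocLegP, legD_eq, sin_rpow]
      linear_combination (Real.sqrt 2 *
      Real.sqrt ((2*(n:ℝ)+1)/(4*Real.pi) *
        ((Nat.factorial (n - m.natAbs) : ℝ) / (Nat.factorial (n + m.natAbs) : ℝ))) *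
       (1 / ((2:ℝ)^n * (Nat.factorial n : ℝ))) * |Real.sin θ|^m.natAbs *
        (Lq n m.natAbs).eval (Real.cos θ) * Real.sin (m.natAbs * φ)) * hm1
    · rw [if_pos (by omega), if_pos (by omega), assocLegP, legD_eq, sin_rpow]
      have : ((m.natAbs : ℕ) : ℝ) = (m : ℝ) := by
        rw [Nat.cast_natAbs, abs_of_pos h]
      rw [this]
      linear_combination (Real.sqrt 2 *
      Real.sqrt ((2*(n:ℝ)+1)/(4*Real.pi) *
        ((Nat.factorial (n - m.natAbs) : ℝ) / (Nat.factorial (n + m.natAbs) : ℝ))) *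
       (1 / ((2:ℝ)^n * (Nat.factorial n : ℝ))) * |Real.sin θ|^m.natAbs *
        (Lq n m.natAbs).eval (Real.cos θ) * Real.cos (m * φ)) * hm1

theorem Yang_bd (m : ℤ) (φ : ℝ) : |Yang m φ| ≤ 1 := by
  unfold Yang; split_ifs
  · exact Real.abs_cos_le_one _
  · exact Real.abs_sin_le_one _

theorem Lq_bd (n k : ℕ) {s : ℝ} (hs : |s| ≤ 1) :
    |(Lq n k).eval s| ≤ (Nat.factorial (n+k) : ℝ) * 4^n * 2^n := by
  have h1 : Lq n k = ∑ l ∈ Finset.range (n+1),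
      C (((2*l).descFactorial (n+k) : ℝ) * ((-1)^(n-l) * (n.choose l : ℝ))) * X^(2*l - (n+k)) := by
    unfold Lq Rod
    rw [sub_eq_add_neg, add_pow, iterate_derivative_sum]
    refine Finset.sum_congr rfl fun l _ => ?_
    have : ((X:ℝ[X])^2)^l * (-1)^(n-l) * (n.choose l : ℝ[X]) =
        C ((-1)^(n-l) * (n.choose l : ℝ)) * X^(2*l) := by
      simp only [C_mul, C_pow, C_neg, C_1, C_eq_natCast, ← pow_mul]; ring
    rw [this, iterate_derivative_C_mul, iterate_derivative_X_pow_eq_C_mul]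
    simp only [C_mul]; ring
  rw [h1, eval_finset_sum]
  refine (Finset.abs_sum_le_sum_abs _ _).trans ?_
  have h2 : ∀ l ∈ Finset.range (n+1), |(C (((2*l).descFactorial (n+k) : ℝ) *
      ((-1)^(n-l) * (n.choose l : ℝ))) * X^(2*l - (n+k))).eval s| ≤
      (Nat.factorial (n+k) : ℝ) * 4^n * (n.choose l : ℝ) := by
    intro l hl
    rw [eval_mul, eval_C, eval_pow, eval_X]
    have h3 : |s^(2*l-(n+k))| ≤ 1 := by
      rw [abs_pow]; exact pow_le_one₀ (abs_nonneg _) hs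
    have h4 : ((2*l).descFactorial (n+k) : ℝ) ≤ (Nat.factorial (n+k) : ℝ) * 4^n := by
      have : (2*l).descFactorial (n+k) ≤ Nat.factorial (n+k) * 4^n := by
        rw [Nat.descFactorial_eq_factorial_mul_choose]
        refine Nat.mul_le_mul_left _ ?_
        refine (Nat.choose_le_two_pow (2*l) (n+k)).trans ?_
        rw [pow_mul]
        exact Nat.pow_le_pow_right (by norm_num) (by simp at hl; omega)
      exact_mod_cast this
    rw [abs_mul, abs_mul, abs_mul, abs_pow, abs_neg, abs_one, one_pow, one_mul, Nat.abs_cast, Nat.abs_cast]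
    calc _ ≤ (Nat.factorial (n+k) : ℝ) * 4^n * (n.choose l : ℝ) * 1 := by gcongr
      _ = _ := by ring
  refine (Finset.sum_le_sum h2).trans ?_
  rw [← Finset.mul_sum]
  have : (∑ l ∈ Finset.range (n+1), (n.choose l : ℝ)) = 2^n := by
    exact_mod_cast Nat.sum_range_choose n
  rw [this]

theorem fact_bd (n k : ℕ) (hk : k ≤ n) :
    (Nat.factorial (n-k) * Nat.factorial (n+k) : ℝ) ≤ 4^n * (Nat.factorial n : ℝ)^2 := by
  have h1 : Nat.choose (2*n) (n+k) * Nat.factorial (n+k) * Nat.factorial (2*n-(n+k)) = Nat.factorial (2*n) :=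
    Nat.choose_mul_factorial_mul_factorial (by omega)
  have h2 : Nat.choose (2*n) n * Nat.factorial n * Nat.factorial (2*n-n) = Nat.factorial (2*n) :=
    Nat.choose_mul_factorial_mul_factorial (by omega)
  rw [show 2*n-(n+k) = n-k by omega] at h1
  rw [show 2*n-n = n by omega] at h2
  have h3 : 1 ≤ Nat.choose (2*n) (n+k) := Nat.choose_pos (by omega)
  have h4 : Nat.choose (2*n) n ≤ 4^n := by
    have := Nat.choose_le_two_pow (2*n) n
    rwa [pow_mul] at this
  have : Nat.factorial (n-k) * Nat.factorial (n+k) ≤ 4^n * (Nat.factorial n)^2 := by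
    calc Nat.factorial (n-k) * Nat.factorial (n+k) ≤ Nat.choose (2*n) (n+k) * (Nat.factorial (n-k) * Nat.factorial (n+k)) :=
          Nat.le_mul_of_pos_left _ h3
      _ = Nat.choose (2*n) n * (Nat.factorial n)^2 := by rw [pow_two]; linarith
      _ ≤ _ := Nat.mul_le_mul_right _ h4
  exact_mod_cast this

theorem Yth_bd (n k : ℕ) (hk : k ≤ n) (θ : ℝ) : |Yth n k θ| ≤ (n+1) * 8^n := by
  unfold Yth Ycst
  have h1 := Lq_bd n k (Real.abs_cos_le_one θ)
  have h2 : |(|Real.sin θ|)^k| ≤ 1 := by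
    rw [abs_pow, abs_abs]; exact pow_le_one₀ (abs_nonneg _) (Real.abs_sin_le_one _)
  set N : ℝ := (Nat.factorial n : ℝ) with hN
  have hNp : 0 < N := by positivity
  set A : ℝ := (Nat.factorial (n-k) : ℝ) with hA
  set B : ℝ := (Nat.factorial (n+k) : ℝ) with hB
  have hAp : 0 < A := by positivity
  have hBp : 0 < B := by positivity
  have hf : A * B ≤ 4^n * N^2 := fact_bd n k hk
  have h3 : (if k = 0 then 1 else Real.sqrt 2) ≤ Real.sqrt 2 := by
    split_ifs
    · rw [Real.le_sqrt (by norm_num) (by norm_num)]; norm_num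
    · exact le_rfl
  have h30 : 0 ≤ (if k = 0 then 1 else Real.sqrt 2) := by split_ifs <;> positivity
  have h4 : Real.sqrt 2 * Real.sqrt ((2*(n:ℝ)+1)/(4*Real.pi) * (A / B)) ≤ (n+1) * (2^n * N / B) := by
    rw [← Real.sqrt_mul (by norm_num)]
    apply Real.sqrt_le_iff.2
    refine ⟨by positivity, ?_⟩
    have h5 : 2 * ((2*(n:ℝ)+1)/(4*Real.pi) * (A / B)) = ((2*(n:ℝ)+1)/(2*Real.pi)) * (A*B) / B^2 := by
      field_simp; ring
    rw [h5]
    have h6 : ((n:ℝ)+1) * (2^n * N / B) = (n+1) * (2^n * N) / B := by ring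
    rw [h6, div_pow]
    gcongr
    have h7 : (2*(n:ℝ)+1)/(2*Real.pi) ≤ (n+1)^2 := by
      rw [div_le_iff₀ (by positivity)]
      have := Real.pi_gt_three
      nlinarith [(Nat.cast_nonneg n : (0:ℝ) ≤ n)]
    calc _ ≤ ((n:ℝ)+1)^2 * (4^n * N^2) := by gcongr
      _ = _ := by
        rw [mul_pow, mul_pow, ← pow_mul, mul_comm n 2, pow_mul]; norm_num
  rw [abs_mul, abs_mul]
  have h8 : |(if k = 0 then 1 else Real.sqrt 2) * Real.sqrt ((2*(n:ℝ)+1)/(4*Real.pi) * (A / B)) * (1 / (2^n * N))|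
      ≤ (n+1) / B := by
    rw [abs_of_nonneg (by positivity)]
    calc _ ≤ Real.sqrt 2 * Real.sqrt ((2*(n:ℝ)+1)/(4*Real.pi) * (A / B)) * (1 / (2^n * N)) := by gcongr
      _ ≤ (n+1) * (2^n * N / B) * (1 / (2^n * N)) := by gcongr
      _ = (n+1) / B := by field_simp
  calc _ ≤ ((n+1) / B) * 1 * (B * 4^n * 2^n) := by gcongr
    _ = (n+1) * (4^n * 2^n) := by field_simp
    _ = (n+1) * 8^n := by rw [← mul_pow]; norm_num

/-- orthogonality by integration by parts -/
theorem Rod_orth (n : ℕ) (N : ℕ) : ∀ (a : ℕ) (p : ℝ[X]), (X^2-1)^a ∣ p → N ≤ n + a →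
    (p = 0 ∨ p.natDegree < N) → ∫ s in (-1:ℝ)..1, p.eval s * (derivative^[N] (Rod n)).eval s = 0 := by
  induction N with
  | zero =>
    intro a p _ _ h
    rcases h with h | h
    · simp [h]
    · omega
  | succ N ih =>
    intro a p ha hN hd
    rw [Function.iterate_succ_apply']
    have hI := intervalIntegral.integral_mul_deriv_eq_deriv_mul (a := -1) (b := 1)
      (u := fun s => p.eval s) (v := fun s => (derivative^[N] (Rod n)).eval s)
      (u' := fun s => (derivative p).eval s) (v' := fun s => (derivative (derivative^[N] (Rod n))).eval s)
      (fun x _ => p.hasDerivAt x) (fun x _ => Polynomial.hasDerivAt _ x)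
      ((Polynomial.continuous _).intervalIntegrable _ _) ((Polynomial.continuous _).intervalIntegrable _ _)
    rw [hI]
    have hz : ∀ s : ℝ, s^2 = 1 → p.eval s * (derivative^[N] (Rod n)).eval s = 0 := by
      intro s hs
      rcases Nat.eq_zero_or_pos a with h | h
      · have hlt : N < n := by omega
        have hdv : (X^2-1)^(n-N) ∣ derivative^[N] (Rod n) := by
          apply Polynomial.pow_sub_dvd_iterate_derivative_of_pow_dvd
          exact dvd_refl _
        obtain ⟨r, hr⟩ := hdv
        rw [hr]
        simp [hs, show n - N ≠ 0 by omega]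
      · obtain ⟨r, hr⟩ := ha
        rw [hr]
        simp [hs, show a ≠ 0 by omega]
    rw [hz 1 (by norm_num), hz (-1) (by norm_num), ih (a-1) (derivative p)]
    · simp
    · have := Polynomial.pow_sub_dvd_iterate_derivative_of_pow_dvd (m := 1) ha
      simpa using this
    · omega
    · rcases hd with h | h
      · left; simp [h]
      · by_cases h0 : p.natDegree = 0
        · left
          rw [Polynomial.eq_C_of_natDegree_eq_zero h0]; simp
        · right
          have := Polynomial.natDegree_derivative_lt h0
          omega

theorem mono_orth (n i b k : ℕ) (hk : k ≤ b) (h : i + 2 * b < n + k) :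
    ∫ s in (-1:ℝ)..1, (s^i * (1-s^2)^b) * (Lq n k).eval s = 0 := by
  have := Rod_orth n (n+k) b (X^i * (X^2-1)^b) (Dvd.intro_left _ rfl) (by omega) (by
    right
    refine lt_of_le_of_lt ?_ h
    compute_degree
    omega)
  simp only [eval_mul, eval_pow, eval_X, eval_sub, eval_one] at this
  have h2 : ∀ s : ℝ, (s^i * (1-s^2)^b) * (Lq n k).eval s =
     (-1)^b * ((s^i * (s^2-1)^b) * (Lq n k).eval s) := by
    intro s
    rw [show (1 - s^2) = (-1) * (s^2-1) by ring, mul_pow]; ring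
  simp only [h2]
  rw [intervalIntegral.integral_const_mul]
  unfold Lq
  rw [this, mul_zero]

theorem integral_cos_sub (g : ℝ → ℝ) (hg : Continuous g) :
    ∫ θ in (0:ℝ)..Real.pi, g (Real.cos θ) * Real.sin θ = ∫ s in (-1:ℝ)..1, g s := by
  have := intervalIntegral.integral_comp_mul_deriv (a := 0) (b := Real.pi) (f := Real.cos)
    (f' := fun θ => -Real.sin θ) (g := g) (fun x _ => Real.hasDerivAt_cos x)
    (Real.continuous_sin.neg.continuousOn) hg
  rw [Real.cos_zero, Real.cos_pi, intervalIntegral.integral_symm (-1) 1] at this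
  rw [← neg_inj, ← this, ← intervalIntegral.integral_neg]
  congr 1; ext θ; simp

end Leg


/-! ### Coefficients -/
section Coe

theorem Yang_cont (m : ℤ) : Continuous (Yang m) := by
  unfold Yang
  split_ifs <;> fun_prop

theorem Yth_cont (n k : ℕ) : Continuous (Yth n k) := by
  unfold Yth
  have := (Lq n k).continuous
  fun_prop

theorem Y_cont (n : ℕ) (m : ℤ) : Continuous (Function.uncurry (Ynm n m)) := by
  have : Function.uncurry (Ynm n m) = fun q : ℝ × ℝ => Yth n m.natAbs q.1 * Yang m q.2 := by
    ext q; exact Ynm_eq n m q.1 q.2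
  rw [this]
  have := Yth_cont n m.natAbs
  have := Yang_cont m
  fun_prop

theorem coeff_congr {u v : SphereFun} (h : ∀ θ ∈ Set.Icc (0:ℝ) Real.pi, ∀ φ, u θ φ = v θ φ) (n m) :
    coeff u n m = coeff v n m := by
  unfold coeff sInner
  congr 1; ext φ
  apply intervalIntegral.integral_congr
  intro θ hθ
  rw [Set.uIcc_of_le Real.pi_pos.le] at hθ
  simp only [h θ hθ φ]

theorem cont_swap {u : SphereFun} (hu : Continuous (Function.uncurry u)) :
    Continuous (fun q : ℝ × ℝ => u q.2 q.1) := hu.comp continuous_swap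

theorem cont_left {u : SphereFun} (hu : Continuous (Function.uncurry u)) (φ : ℝ) :
    Continuous (fun θ : ℝ => u θ φ) := hu.comp (Continuous.prodMk_left φ)

theorem inner_cont {u : SphereFun} (hu : Continuous (Function.uncurry u)) (n m) :
    Continuous (fun φ => ∫ θ in (0:ℝ)..Real.pi, u θ φ * Ynm n m θ φ * Real.sin θ) := by
  apply intervalIntegral.continuous_parametric_intervalIntegral_of_continuous'
  have h1 : Continuous (fun q : ℝ × ℝ => u q.2 q.1) := hu.comp continuous_swap
  have h2 : Continuous (fun q : ℝ × ℝ => Ynm n m q.2 q.1) := cont_swap (Y_cont n m)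
  exact (h1.mul h2).mul (Real.continuous_sin.comp continuous_snd)

theorem inner_int {u : SphereFun} (hu : Continuous (Function.uncurry u)) (n m φ) :
    IntervalIntegrable (fun θ => u θ φ * Ynm n m θ φ * Real.sin θ) volume 0 Real.pi := by
  apply Continuous.intervalIntegrable
  have h1 : Continuous (fun θ : ℝ => u θ φ) := hu.comp (Continuous.prodMk_left φ)
  have h2 : Continuous (fun θ : ℝ => Ynm n m θ φ) := cont_left (Y_cont n m) φ
  exact (h1.mul h2).mul (Real.continuous_sin)

theorem coeff_add {u v : SphereFun} (hu : Continuous (Function.uncurry u))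
    (hv : Continuous (Function.uncurry v)) (n m) :
    coeff (fun θ φ => u θ φ + v θ φ) n m = coeff u n m + coeff v n m := by
  unfold coeff sInner
  rw [← intervalIntegral.integral_add ((inner_cont hu n m).intervalIntegrable _ _)
    ((inner_cont hv n m).intervalIntegrable _ _)]
  congr 1; ext φ
  rw [← intervalIntegral.integral_add (inner_int hu n m φ) (inner_int hv n m φ)]
  congr 1; ext θ; ring

theorem coeff_smul (c : ℝ) (u : SphereFun) (n m) :
    coeff (fun θ φ => c * u θ φ) n m = c * coeff u n m := by
  unfold coeff sInner
  rw [← intervalIntegral.integral_const_mul]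
  congr 1; ext φ
  rw [← intervalIntegral.integral_const_mul]
  congr 1; ext θ; ring

theorem coeff_bd {u : SphereFun} {B : ℝ} (hu : ∀ θ φ, |u θ φ| ≤ B) {n : ℕ} {m : ℤ}
    (hm : |m| ≤ n) : |coeff u n m| ≤ B * ((n+1) * 8^n) * (2 * Real.pi^2) := by
  have hB : 0 ≤ B := (abs_nonneg _).trans (hu 0 0)
  have hk : m.natAbs ≤ n := by rw [Int.abs_eq_natAbs] at hm; omega
  unfold coeff sInner
  have h1 : ∀ φ, ‖∫ θ in (0:ℝ)..Real.pi, u θ φ * Ynm n m θ φ * Real.sin θ‖ ≤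
      B * ((n+1) * 8^n) * |Real.pi - 0| := by
    intro φ
    apply intervalIntegral.norm_integral_le_of_norm_le_const
    intro θ _
    rw [Real.norm_eq_abs, Ynm_eq, abs_mul, abs_mul, abs_mul]
    have h2 := Yth_bd n m.natAbs hk θ
    have h3 := Yang_bd m φ
    have h4 := Real.abs_sin_le_one θ
    calc _ ≤ B * (((n+1) * 8^n) * 1) * 1 := by
          gcongr
          exact hu θ φ
      _ = _ := by ring
  have := intervalIntegral.norm_integral_le_of_norm_le_const (a := 0) (b := 2 * Real.pi) (fun φ _ => h1 φ)
  rw [Real.norm_eq_abs] at this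
  refine this.trans (le_of_eq ?_)
  rw [sub_zero, sub_zero, abs_of_pos Real.pi_pos, abs_of_pos (by positivity)]
  ring

theorem coeff_sep (f g : ℝ → ℝ) (n m) : coeff (fun θ φ => f θ * g φ) n m =
    (∫ θ in (0:ℝ)..Real.pi, f θ * Yth n m.natAbs θ * Real.sin θ) *
    (∫ φ in (0:ℝ)..(2*Real.pi), g φ * Yang m φ) := by
  unfold coeff sInner
  rw [← intervalIntegral.integral_const_mul]
  congr 1; ext φ
  rw [mul_comm, ← intervalIntegral.integral_const_mul]
  congr 1; ext θ
  rw [Ynm_eq]; ring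

theorem int_cos (m : ℤ) (hm : m ≠ 0) : ∫ φ in (0:ℝ)..(2*Real.pi), Real.cos (m * φ) = 0 := by
  have hm' : (m:ℝ) ≠ 0 := by exact_mod_cast hm
  rw [intervalIntegral.integral_comp_mul_left (fun x => Real.cos x) hm', integral_cos]
  have : (m:ℝ) * (2 * Real.pi) = 0 + m * (2 * Real.pi) := by ring
  rw [this, Real.sin_add_int_mul_two_pi]
  simp

theorem int_sin (m : ℤ) : ∫ φ in (0:ℝ)..(2*Real.pi), Real.sin (m * φ) = 0 := by
  rcases eq_or_ne m 0 with h | hm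
  · simp [h]
  have hm' : (m:ℝ) ≠ 0 := by exact_mod_cast hm
  rw [intervalIntegral.integral_comp_mul_left (fun x => Real.sin x) hm', integral_sin]
  have : (m:ℝ) * (2 * Real.pi) = 0 + m * (2 * Real.pi) := by ring
  rw [this, Real.cos_add_int_mul_two_pi]
  simp

theorem phi_cos (j : ℕ) : ∀ m : ℤ, (¬ (2 ∣ m) ∨ 2 * (j:ℤ) < |m|) →
    ∫ φ in (0:ℝ)..(2*Real.pi), (Real.cos (2*φ))^j * Real.cos (m * φ) = 0 := by
  induction j with
  | zero =>
    intro m hm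
    have : m ≠ 0 := by rintro rfl; simp at hm
    simpa using int_cos m this
  | succ j ih =>
    intro m hm
    have h : ∀ φ : ℝ, (Real.cos (2*φ))^(j+1) * Real.cos (m * φ) =
        (1/2) * ((Real.cos (2*φ))^j * Real.cos ((m+2 : ℤ) * φ)) +
        (1/2) * ((Real.cos (2*φ))^j * Real.cos ((m-2 : ℤ) * φ)) := by
      intro φ
      push_cast
      rw [add_mul, sub_mul, Real.cos_add, Real.cos_sub]; ring
    simp only [h]
    rw [intervalIntegral.integral_add (Continuous.intervalIntegrable (by fun_prop) _ _)
      (Continuous.intervalIntegrable (by fun_prop) _ _), intervalIntegral.integral_const_mul,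
      intervalIntegral.integral_const_mul, ih (m+2), ih (m-2)]
    · simp
    · simp only [Int.abs_eq_natAbs] at *; omega
    · simp only [Int.abs_eq_natAbs] at *; omega

theorem phi_sin (j : ℕ) : ∀ m : ℤ,
    ∫ φ in (0:ℝ)..(2*Real.pi), (Real.cos (2*φ))^j * Real.sin (m * φ) = 0 := by
  induction j with
  | zero =>
    intro m
    simpa using int_sin m
  | succ j ih =>
    intro m
    have h : ∀ φ : ℝ, (Real.cos (2*φ))^(j+1) * Real.sin (m * φ) =
        (1/2) * ((Real.cos (2*φ))^j * Real.sin ((m+2 : ℤ) * φ)) +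
        (1/2) * ((Real.cos (2*φ))^j * Real.sin ((m-2 : ℤ) * φ)) := by
      intro φ
      push_cast
      rw [add_mul, sub_mul, Real.sin_add, Real.sin_sub]; ring
    simp only [h]
    rw [intervalIntegral.integral_add (Continuous.intervalIntegrable (by fun_prop) _ _)
      (Continuous.intervalIntegrable (by fun_prop) _ _), intervalIntegral.integral_const_mul,
      intervalIntegral.integral_const_mul, ih (m+2), ih (m-2)]
    simp

theorem phi_Yang (j : ℕ) (m : ℤ) (h : m < 0 ∨ ¬ (2 ∣ m) ∨ 2 * (j:ℤ) < |m|) :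
    ∫ φ in (0:ℝ)..(2*Real.pi), (Real.cos (2*φ))^j * Yang m φ = 0 := by
  unfold Yang
  by_cases h0 : 0 ≤ m
  · simp only [h0, if_true]
    exact phi_cos j m (by omega)
  · simp only [h0, if_false]
    exact phi_sin j m.natAbs

namespace EA

theorem coeff_mono (ε : ℝ) (i j n : ℕ) (m : ℤ) : coeff (mono ε (i,j)) n m =
    ε^j / 64^i * (∫ θ in (0:ℝ)..Real.pi, (Real.cos θ)^i * (Real.sin θ)^(2*j) * Yth n m.natAbs θ * Real.sin θ) *
    (∫ φ in (0:ℝ)..(2*Real.pi), (Real.cos (2*φ))^j * Yang m φ) := by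
  have h : mono ε (i,j) = fun θ φ => (ε^j / 64^i * ((Real.cos θ)^i * (Real.sin θ)^(2*j))) * (Real.cos (2*φ))^j := by
    ext θ φ
    simp only [mono, mul_pow, div_pow, pow_mul]; ring
  rw [h, coeff_sep, ← intervalIntegral.integral_const_mul (ε^j / 64^i)]
  congr 2; ext θ; ring

theorem theta_int (i j l n : ℕ) : ∫ θ in (0:ℝ)..Real.pi, (Real.cos θ)^i * (Real.sin θ)^(2*j) * Yth n (2*l) θ * Real.sin θ =
    Ycst n (2*l) * ∫ s in (-1:ℝ)..1, (s^i * (1-s^2)^(j+l)) * (Lq n (2*l)).eval s := by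
  rw [← integral_cos_sub _ (by
    have := (Lq n (2*l)).continuous
    fun_prop), ← intervalIntegral.integral_const_mul]
  congr 1; ext θ
  have h1 : 1 - (Real.cos θ)^2 = (Real.sin θ)^2 := (Real.sin_sq θ).symm
  have h2 : |Real.sin θ|^(2*l) = ((Real.sin θ)^2)^l := by rw [pow_mul, sq_abs]
  unfold Yth
  rw [h1, h2, pow_add, pow_mul]; ring

theorem coeff_mono_zero (ε : ℝ) (i j n : ℕ) (m : ℤ) (h : i + 2 * j < n) :
    coeff (mono ε (i,j)) n m = 0 := by
  rw [coeff_mono]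
  by_cases hm : m < 0 ∨ ¬ (2 ∣ m) ∨ 2 * (j:ℤ) < |m|
  · rw [phi_Yang j m hm, mul_zero]
  · push Not at hm
    obtain ⟨h0, ⟨l, hl⟩, h2⟩ := hm
    have h3 : m.natAbs = 2 * l.natAbs := by omega
    rw [Int.abs_eq_natAbs] at h2
    rw [h3, theta_int, mono_orth n i (j + l.natAbs) (2 * l.natAbs) (by omega) (by omega)]
    simp

theorem coeff_mono_bd {ε : ℝ} (hε : |ε| ≤ 1/4096) (i j n : ℕ) (m : ℤ) (hm : |m| ≤ n) :
    |coeff (mono ε (i,j)) n m| ≤ (4096 * |ε|)^j * ((n+1) / 8^n * (2 * Real.pi^2)) := by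
  rcases lt_or_ge (i + 2 * j) n with h | h
  · rw [coeff_mono_zero ε i j n m h, abs_zero]; positivity
  · have h1 : ∀ θ φ, |mono ε (i,j) θ φ| ≤ (4096 * |ε|)^j * (1/64)^n := by
      intro θ φ
      unfold mono
      simp only
      rw [abs_mul, abs_pow, abs_pow]
      have h2 := (admTheta hε φ).bA θ
      have h3 : |ε * (Real.sin θ)^2 * Real.cos (2*φ)| ≤ |ε| := by
        rw [mul_assoc]
        refine hsmall le_rfl (habs2 ?_ (bC _)) le_rfl
        rw [pow_two]; exact habs2 (bS _) (bS _)
      calc _ ≤ (1/64:ℝ)^i * |ε|^j := by gcongr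
        _ = (4096 * |ε|)^j * (1/64:ℝ)^(i+2*j) := by
          rw [pow_add, pow_mul, mul_pow]
          have : (4096:ℝ)^j * ((1/64)^2)^j = 1 := by rw [← mul_pow]; norm_num
          linear_combination (-(1/64:ℝ)^i * |ε|^j) * this
        _ ≤ (4096 * |ε|)^j * (1/64)^n := by
          gcongr ?_ * ?_
          exact pow_le_pow_of_le_one (by norm_num) (by norm_num) h
    refine (coeff_bd h1 hm).trans (le_of_eq ?_)
    have : (1/64:ℝ)^n * 8^n = 1 / 8^n := by
      rw [← mul_pow, ← one_div_pow]; norm_num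
    rw [div_eq_mul_one_div _ ((8:ℝ)^n), ← this]; ring

theorem mono_cont (ε : ℝ) (p) : Continuous (Function.uncurry (mono ε p)) := by
  have : Function.uncurry (mono ε p) = fun q : ℝ × ℝ =>
    (Real.cos q.1 / 64)^p.1 * (ε * (Real.sin q.1)^2 * Real.cos (2*q.2))^p.2 := rfl
  rw [this]; fun_prop

theorem Fu_cont {ε : ℝ} (hε : |ε| ≤ 1/4096) (a : EA) : Continuous (Function.uncurry (Fu ε a)) :=
  (contDiff_Fu hε a).continuous

theorem Fu_bd {ε : ℝ} (hε : |ε| ≤ 1/4096) (a : EA) (θ φ) : |Fu ε a θ φ| ≤ ‖a‖ := by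
  rw [← ev_apply hε]
  have := (ev ε hε θ φ).le_opNorm a
  rw [Real.norm_eq_abs] at this
  refine this.trans ?_
  have h : ‖ev ε hε θ φ‖ ≤ 1 := lift_norm_le _ _ _
  have := norm_nonneg a
  nlinarith

theorem Fu_add {ε : ℝ} (hε : |ε| ≤ 1/4096) (a b : EA) (θ φ) : Fu ε (a + b) θ φ = Fu ε a θ φ + Fu ε b θ φ := by
  simp only [← ev_apply hε, map_add]

theorem Fu_smul {ε : ℝ} (hε : |ε| ≤ 1/4096) (c : ℝ) (a : EA) (θ φ) : Fu ε (c • a) θ φ = c * Fu ε a θ φ := by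
  simp only [← ev_apply hε, map_smul, smul_eq_mul]

def coC (ε : ℝ) (hε : |ε| ≤ 1/4096) (n : ℕ) (m : ℤ) (hm : |m| ≤ n) : EA →L[ℝ] ℝ :=
  LinearMap.mkContinuous
    { toFun := fun a => coeff (Fu ε a) n m
      map_add' := fun a b => by
        rw [← coeff_add (Fu_cont hε a) (Fu_cont hε b)]
        congr 1; ext θ φ; exact Fu_add hε a b θ φ
      map_smul' := fun c a => by
        simp only [RingHom.id_apply, smul_eq_mul]
        rw [← coeff_smul]
        congr 1; ext θ φ; exact Fu_smul hε c a θ φ }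
    (((n+1) * 8^n) * (2 * Real.pi^2)) (fun a => by
      have := coeff_bd (Fu_bd hε a) hm
      simp only [LinearMap.coe_mk, AddHom.coe_mk, Real.norm_eq_abs]
      linarith)

theorem coC_apply {ε : ℝ} (hε : |ε| ≤ 1/4096) (n : ℕ) (m : ℤ) (hm : |m| ≤ n) (a : EA) :
    coC ε hε n m hm a = coeff (Fu ε a) n m := rfl

theorem Fu_e {ε : ℝ} (hε : |ε| ≤ 1/4096) (p) : Fu ε (e p) = mono ε p := by
  ext θ φ; rw [← ev_apply hε, ev_e]

theorem coC_e {ε : ℝ} (hε : |ε| ≤ 1/4096) (n : ℕ) (m : ℤ) (hm : |m| ≤ n) (p) :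
    coC ε hε n m hm (e p) = coeff (mono ε p) n m := by
  rw [coC_apply, Fu_e hε]

theorem clm_bd {f : EA →L[ℝ] ℝ} {C : ℝ} (h : ∀ p, |f (e p)| ≤ C) (a : EA) : |f a| ≤ C * ‖a‖ := by
  have : f = lift (fun p => f (e p)) C h := ext_e (fun p => by simp)
  rw [this, ← Real.norm_eq_abs]
  refine (ContinuousLinearMap.le_opNorm _ a).trans ?_
  gcongr
  exact lift_norm_le _ _ _

theorem coeff_Fu_bd {ε : ℝ} (hε : |ε| ≤ 1/4096) (n : ℕ) (m : ℤ) (hm : |m| ≤ n) (a : EA) :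
    |coeff (Fu ε a) n m| ≤ ((n+1) / 8^n * (2 * Real.pi^2)) * ‖a‖ := by
  rw [← coC_apply hε n m hm]
  apply clm_bd
  rintro ⟨i, j⟩
  rw [coC_e]
  refine (coeff_mono_bd hε i j n m hm).trans ?_
  have : (4096 * |ε|)^j ≤ 1 := pow_le_one₀ (by positivity) (by linarith)
  have h2 : 0 ≤ ((n+1) / 8^n * (2 * Real.pi^2)) := by positivity
  nlinarith

end EA

def gevC : ℝ := ∑' p : ℕ × ℤ, (8 * ((p.1:ℝ)+1)^6 * (1/4)^p.1) * (1/2)^p.2.natAbs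

theorem gev_summable : Summable (fun p : ℕ × ℤ => (8 * ((p.1:ℝ)+1)^6 * (1/4)^p.1) * (1/2:ℝ)^p.2.natAbs) := by
  apply Summable.mul_of_nonneg (f := fun n : ℕ => (8 * ((n:ℝ)+1)^6 * (1/4)^n))
    (g := fun m : ℤ => (1/2:ℝ)^m.natAbs)
  · have h := summable_pow_mul_geometric_of_norm_lt_one 6 (r := (1/4:ℝ)) (by norm_num)
    have h2 := ((summable_nat_add_iff 1).2 h).mul_left 32
    refine h2.congr ?_
    intro n
    push_cast
    rw [pow_succ (1/4:ℝ)]; ring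
  · apply Summable.of_nat_of_neg
    · simpa using summable_geometric_two
    · simpa using summable_geometric_two
  · intro n; positivity
  · intro m; positivity

theorem gev_bd {u : SphereFun} {K : ℝ} (h : ∀ n : ℕ, ∀ m : ℤ, |m| ≤ n → |coeff u n m| ≤ (n+1) / 8^n * K) :
    gevNormSq 1 u ≤ ENNReal.ofReal (gevC * K^2) := by
  have hs := gev_summable.mul_right (K^2)
  have e1 : gevC * K^2 = ∑' p : ℕ × ℤ, (8 * ((p.1:ℝ)+1)^6 * (1/4)^p.1) * (1/2:ℝ)^p.2.natAbs * K^2 := by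
    rw [gevC, tsum_mul_right]
  rw [e1, ENNReal.ofReal_tsum_of_nonneg (fun p => by positivity) hs]
  unfold gevNormSq
  refine ENNReal.tsum_le_tsum ?_
  rintro ⟨n, m⟩
  simp only
  split_ifs with hc
  · apply ENNReal.ofReal_le_ofReal
    have h1 := h n m hc.2
    have hn : (0:ℝ) ≤ n := Nat.cast_nonneg n
    have hmu : muSp n ≤ ((n:ℝ)+1)^2 := by unfold muSp; nlinarith
    have hmu0 : 0 ≤ muSp n := by unfold muSp; positivity
    have hsq : Real.sqrt (muSp n) ≤ n+1 := by
      apply Real.sqrt_le_iff.2; exact ⟨by positivity, hmu⟩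
    have he : Real.exp (2 * 1 * Real.sqrt (muSp n)) ≤ 8^(n+1) := by
      calc Real.exp (2 * 1 * Real.sqrt (muSp n)) ≤ Real.exp ((n+1:ℕ) * 2) := by
            apply Real.exp_le_exp.2; push_cast; linarith
        _ = (Real.exp 2)^(n+1) := by rw [Real.exp_nat_mul]
        _ ≤ 8^(n+1) := by
          gcongr
          have := Real.exp_one_lt_d9
          have h2 : Real.exp 2 = Real.exp 1 * Real.exp 1 := by rw [← Real.exp_add]; norm_num
          rw [h2]
          have := Real.exp_pos 1
          nlinarith
    have hco : (coeff u n m)^2 ≤ ((n+1) / 8^n * K)^2 := by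
      rw [← sq_abs]; exact pow_le_pow_left₀ (abs_nonneg _) h1 2
    have hm : (1/2:ℝ)^n ≤ (1/2)^m.natAbs :=
      pow_le_pow_of_le_one (by norm_num) (by norm_num) (by have := hc.2; rw [Int.abs_eq_natAbs] at this; omega)
    calc _ ≤ (((n:ℝ)+1)^2)^2 * 8^(n+1) * ((n+1) / 8^n * K)^2 := by gcongr
      _ = 8 * ((n:ℝ)+1)^6 * (1/8)^n * K^2 := by
        have h8 : (8:ℝ)^n * (1/8)^n = 1 := by rw [← mul_pow]; norm_num
        have h9 : 1 / (8:ℝ)^n = (1/8)^n := by rw [one_div_pow]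
        rw [pow_succ, div_eq_mul_one_div ((n:ℝ)+1), h9]
        linear_combination (8 * ((n:ℝ)+1)^6 * (1/8)^n * K^2) * h8
      _ = 8 * ((n:ℝ)+1)^6 * (1/4)^n * (1/2)^n * K^2 := by
        rw [mul_assoc (8 * ((n:ℝ)+1)^6) ((1/4)^n), ← mul_pow]; norm_num
      _ ≤ _ := by gcongr
  · exact zero_le

end Coe


/-! ### Explicit harmonics and functionals -/
section Expl
open Polynomial

theorem Lq_10 (s : ℝ) : (Lq 1 0).eval s = 2 * s := by
  simp [Lq, Rod]
  left; norm_num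

theorem Lq_20 (s : ℝ) : (Lq 2 0).eval s = 4 * (3 * s^2 - 1) := by
  have : Rod 2 = X^4 - C 2 * X^2 + C 1 := by
    simp only [Rod, map_ofNat, map_one]; ring
  rw [Lq, this]
  simp only [iterate_derivative_sub, iterate_map_add, iterate_derivative_C_mul,
    iterate_derivative_X_pow_eq_C_mul, iterate_derivative_C (show 0 < 2 + 0 by norm_num)]
  simp [Nat.descFactorial]
  ring

theorem Lq_42 (s : ℝ) : (Lq 4 2).eval s = 2880 * (7 * s^2 - 1) := by
  have : Rod 4 = X^8 - C 4 * X^6 + C 6 * X^4 - C 4 * X^2 + C 1 := by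
    simp only [Rod, map_ofNat, map_one]; ring
  rw [Lq, this]
  simp only [iterate_derivative_sub, iterate_map_add, iterate_derivative_C_mul,
    iterate_derivative_X_pow_eq_C_mul, iterate_derivative_C (show 0 < 4 + 2 by norm_num)]
  simp [Nat.descFactorial]
  ring

theorem Lq_62 (s : ℝ) : (Lq 6 2).eval s = 604800 * (33 * s^4 - 18 * s^2 + 1) := by
  have : Rod 6 = X^12 - C 6 * X^10 + C 15 * X^8 - C 20 * X^6 + C 15 * X^4 - C 6 * X^2 + C 1 := by
    simp only [Rod, map_ofNat, map_one]; ring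
  rw [Lq, this]
  simp only [iterate_derivative_sub, iterate_map_add, iterate_derivative_C_mul,
    iterate_derivative_X_pow_eq_C_mul, iterate_derivative_C (show 0 < 6 + 2 by norm_num)]
  simp [Nat.descFactorial]
  ring

def c1 : ℝ := Real.sqrt (3 / (4 * Real.pi))
def c2 : ℝ := Real.sqrt (5 / (16 * Real.pi))
def k4 : ℝ := Real.sqrt (45 / (64 * Real.pi))
def k6 : ℝ := Real.sqrt (1365 / (2048 * Real.pi))

theorem Y10 (θ φ : ℝ) : Ynm 1 0 θ φ = c1 * Real.cos θ := by
  rw [Ynm_eq]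
  have h1 : Yang 0 φ = 1 := by simp [Yang]
  have h2 : Ycst 1 0 = c1 * (1/2) := by
    simp only [Ycst, c1]; norm_num [Nat.factorial]
  rw [h1, Yth]
  simp only [Int.natAbs_zero, pow_zero, Lq_10, h2]; ring

theorem Y20 (θ φ : ℝ) : Ynm 2 0 θ φ = c2 * (3 * (Real.cos θ)^2 - 1) := by
  rw [Ynm_eq]
  have h1 : Yang 0 φ = 1 := by simp [Yang]
  have h2 : Ycst 2 0 = c2 * (1/4) := by
    simp only [Ycst, c2]
    norm_num [Nat.factorial]
    ring
  rw [h1, Yth]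
  simp only [Int.natAbs_zero, pow_zero, Lq_20, h2]; ring

theorem Ycst42 : Ycst 4 2 * 2880 = k4 := by
  simp only [Ycst, k4]
  rw [if_neg (by norm_num), ← Real.sqrt_mul (by norm_num)]
  rw [← sq_eq_sq₀ (by positivity) (by positivity)]
  rw [mul_pow, mul_pow, Real.sq_sqrt (by positivity), Real.sq_sqrt (by positivity)]
  norm_num [Nat.factorial]
  field_simp
  norm_num

theorem Ycst62 : Ycst 6 2 * 604800 = k6 := by
  simp only [Ycst, k6]
  rw [if_neg (by norm_num), ← Real.sqrt_mul (by norm_num)]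
  rw [← sq_eq_sq₀ (by positivity) (by positivity)]
  rw [mul_pow, mul_pow, Real.sq_sqrt (by positivity), Real.sq_sqrt (by positivity)]
  norm_num [Nat.factorial]
  field_simp
  norm_num

def Mo (i : ℕ) : ℝ := (1 + (-1)^i) * 8 / ((i+1) * (i+3) * (i+5))
def Sg (i : ℕ) : ℝ := (1 + (-1)^i) * (2 * i) / ((i+1) * (i+3))
def N4 (i : ℕ) : ℝ := 7 * Mo (i+2) - Mo i
def N6 (i : ℕ) : ℝ := 33 * Mo (i+4) - 18 * Mo (i+2) + Mo i

theorem Mo_int (i : ℕ) : ∫ s in (-1:ℝ)..1, s^i * (1-s^2)^2 = Mo i := by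
  have h : ∀ s : ℝ, s^i * (1-s^2)^2 = s^i - 2 * s^(i+2) + s^(i+4) := by intro s; ring
  simp only [h]
  rw [intervalIntegral.integral_add (Continuous.intervalIntegrable (by fun_prop) _ _)
    (Continuous.intervalIntegrable (by fun_prop) _ _),
    intervalIntegral.integral_sub (Continuous.intervalIntegrable (by fun_prop) _ _)
    (Continuous.intervalIntegrable (by fun_prop) _ _), intervalIntegral.integral_const_mul,
    integral_pow, integral_pow, integral_pow]
  unfold Mo
  have h1 : ((i:ℝ)+1) ≠ 0 := by positivity
  have h3 : ((i:ℝ)+3) ≠ 0 := by positivity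
  have h5 : ((i:ℝ)+5) ≠ 0 := by positivity
  push_cast
  rw [show (i:ℝ)+2+1 = i+3 by ring, show (i:ℝ)+4+1 = i+5 by ring]
  simp only [one_pow, pow_succ]
  field_simp
  ring

theorem N4_int (i : ℕ) : ∫ s in (-1:ℝ)..1, s^i * (1-s^2)^(1+1) * (Lq 4 2).eval s = 2880 * N4 i := by
  have h : ∀ s : ℝ, s^i * (1-s^2)^(1+1) * (Lq 4 2).eval s =
      2880 * (7 * (s^(i+2) * (1-s^2)^2) - s^i * (1-s^2)^2) := by
    intro s; rw [Lq_42]; ring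
  simp only [h]
  rw [intervalIntegral.integral_const_mul,
    intervalIntegral.integral_sub (Continuous.intervalIntegrable (by fun_prop) _ _)
    (Continuous.intervalIntegrable (by fun_prop) _ _), intervalIntegral.integral_const_mul,
    Mo_int, Mo_int, N4]

theorem N6_int (i : ℕ) : ∫ s in (-1:ℝ)..1, s^i * (1-s^2)^(1+1) * (Lq 6 2).eval s = 604800 * N6 i := by
  have h : ∀ s : ℝ, s^i * (1-s^2)^(1+1) * (Lq 6 2).eval s =
      604800 * (33 * (s^(i+4) * (1-s^2)^2) - 18 * (s^(i+2) * (1-s^2)^2) + s^i * (1-s^2)^2) := by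
    intro s; rw [Lq_62]; ring
  simp only [h]
  rw [intervalIntegral.integral_const_mul,
    intervalIntegral.integral_add (Continuous.intervalIntegrable (by fun_prop) _ _)
    (Continuous.intervalIntegrable (by fun_prop) _ _),
    intervalIntegral.integral_sub (Continuous.intervalIntegrable (by fun_prop) _ _)
    (Continuous.intervalIntegrable (by fun_prop) _ _), intervalIntegral.integral_const_mul,
    intervalIntegral.integral_const_mul, Mo_int, Mo_int, Mo_int, N6]

theorem phi22 : ∫ φ in (0:ℝ)..(2*Real.pi), (Real.cos (2*φ))^1 * Yang 2 φ = Real.pi := by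
  have h : ∀ φ : ℝ, (Real.cos (2*φ))^1 * Yang 2 φ = 1/2 + (1/2) * Real.cos ((4:ℤ)*φ) := by
    intro φ
    have : Real.cos ((4:ℤ)*φ) = 2 * (Real.cos (2*φ))^2 - 1 := by
      rw [← Real.cos_two_mul]; congr 1; push_cast; ring
    rw [this]; simp [Yang]; ring
  simp only [h]
  rw [intervalIntegral.integral_add (Continuous.intervalIntegrable (by fun_prop) _ _)
    (Continuous.intervalIntegrable (by fun_prop) _ _), intervalIntegral.integral_const_mul,
    int_cos 4 (by norm_num)]
  simp; ring

namespace EA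

theorem coeff42 (ε : ℝ) (i : ℕ) : coeff (mono ε (i,1)) 4 2 = ε * (k4 * Real.pi) * (N4 i / 64^i) := by
  have h := theta_int i 1 1 4
  rw [N4_int] at h
  rw [coeff_mono, phi22, show (2:ℤ).natAbs = 2 * 1 by rfl, h, ← Ycst42]
  ring

theorem coeff62 (ε : ℝ) (i : ℕ) : coeff (mono ε (i,1)) 6 2 = ε * (k6 * Real.pi) * (N6 i / 64^i) := by
  have h := theta_int i 1 1 6
  rw [N6_int] at h
  rw [coeff_mono, phi22, show (2:ℤ).natAbs = 2 * 1 by rfl, h, ← Ycst62]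
  ring

theorem sgn_bd (i : ℕ) : |1 + (-1:ℝ)^i| ≤ 2 := by
  rcases neg_one_pow_eq_or ℝ i with h | h <;> rw [h] <;> norm_num

theorem Mo_bd (i : ℕ) : |Mo i| ≤ 2 := by
  unfold Mo
  rw [abs_div, abs_mul, div_le_iff₀ (by positivity)]
  have h := sgn_bd i
  have hi : (0:ℝ) ≤ i := Nat.cast_nonneg i
  rw [abs_of_nonneg (by positivity : (0:ℝ) ≤ (i+1)*(i+3)*(i+5))]
  norm_num
  nlinarith [mul_nonneg hi hi, mul_nonneg (mul_nonneg hi hi) hi]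

theorem Sg_bd (i : ℕ) : |Sg i| ≤ 104 := by
  unfold Sg
  have hi : (0:ℝ) ≤ i := Nat.cast_nonneg i
  rw [abs_div, abs_mul, div_le_iff₀ (by positivity)]
  have h := sgn_bd i
  rw [abs_of_nonneg (by positivity : (0:ℝ) ≤ (i+1)*(i+3)), abs_of_nonneg (by positivity : (0:ℝ) ≤ 2*i)]
  nlinarith [mul_nonneg hi hi, abs_nonneg (1 + (-1:ℝ)^i)]

theorem N4_bd (i : ℕ) : |N4 i| ≤ 104 := by
  have h1 := abs_le.1 (Mo_bd i)
  have h2 := abs_le.1 (Mo_bd (i+2))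
  unfold N4; rw [abs_le]; constructor <;> linarith [h1.1, h1.2, h2.1, h2.2]

theorem N6_bd (i : ℕ) : |N6 i| ≤ 104 := by
  have h1 := abs_le.1 (Mo_bd i)
  have h2 := abs_le.1 (Mo_bd (i+2))
  have h3 := abs_le.1 (Mo_bd (i+4))
  unfold N6; rw [abs_le]; constructor <;> linarith [h1.1, h1.2, h2.1, h2.2, h3.1, h3.2]

theorem Mo_bd' (i : ℕ) : |Mo i| ≤ 104 := (Mo_bd i).trans (by norm_num)

/-- functional attached to a moment sequence -/
def fn (N : ℕ → ℝ) (h : ∀ i, |N i| ≤ 104) (j0 : ℕ) : EA →L[ℝ] ℝ :=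
  lift (fun p => if p.2 = j0 then N p.1 / 64^p.1 else 0) 104 (fun p => by
    split_ifs
    · rw [Real.norm_eq_abs, abs_div, div_le_iff₀ (by positivity)]
      have h1 : (1:ℝ) ≤ |64^p.1| := by
        rw [abs_of_pos (by positivity)]; exact one_le_pow₀ (by norm_num)
      have := h p.1
      nlinarith
    · simp)

theorem fn_e (N : ℕ → ℝ) (h : ∀ i, |N i| ≤ 104) (j0 : ℕ) (p) :
    fn N h j0 (e p) = if p.2 = j0 then N p.1 / 64^p.1 else 0 := lift_e _ _ _ _

def fS := fn Sg Sg_bd 0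
def fT := fn Mo Mo_bd' 1
def f4 := fn N4 N4_bd 1
def f6 := fn N6 N6_bd 1

theorem co42_bd {ε : ℝ} (hε : |ε| ≤ 1/4096) (n : ℕ) (K : ℝ) (N : ℕ → ℝ) (h : ∀ i, |N i| ≤ 104)
    (hn : 2 ≤ n)
    (hc : ∀ i, coeff (mono ε (i,1)) n 2 = ε * K * (N i / 64^i)) (a : EA) :
    |coeff (Fu ε a) n 2 - ε * (K * fn N h 1 a)| ≤ (4096^2 * ((n+1) / 8^n * (2 * Real.pi^2))) * ε^2 * ‖a‖ := by
  have hm : |(2:ℤ)| ≤ n := by simp; exact_mod_cast hn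
  have e1 : coeff (Fu ε a) n 2 - ε * (K * fn N h 1 a) =
    (coC ε hε n 2 hm - (ε * K) • fn N h 1) a := by
    simp only [sub_apply, smul_apply, coC_apply, smul_eq_mul]; ring
  rw [e1]
  apply clm_bd
  rintro ⟨i, j⟩
  simp only [sub_apply, smul_apply, coC_e, fn_e, smul_eq_mul]
  have hK : 0 ≤ ((n+1) / 8^n * (2 * Real.pi^2)) := by positivity
  rcases j with _ | _ | j
  · rw [coeff_mono, phi_Yang 0 2 (by right; right; norm_num)]
    simp; positivity
  · rw [if_pos rfl, zero_add, hc]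
    simp; positivity
  · rw [if_neg (by omega), mul_zero, sub_zero]
    refine (coeff_mono_bd hε i (j+1+1) n 2 hm).trans ?_
    have h1 : (4096 * |ε|)^(j+1+1) ≤ (4096 * |ε|)^2 := by
      apply pow_le_pow_of_le_one (by positivity) (by linarith) (by omega)
    have h2 : (4096 * |ε|)^2 = 4096^2 * ε^2 := by rw [mul_pow, sq_abs]
    rw [h2] at h1
    nlinarith

theorem fn_eig (N : ℕ → ℝ) (h : ∀ i, |N i| ≤ 104) (j0 : ℕ) (l : ℝ)
    (hN : ∀ i : ℕ, (6 - ((i:ℝ) + 2 * j0) * (i + 2 * j0 + 1)) * N i + i * (i-1) * N (i-2) = - l * N i) (x : EA) :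
    fn N h j0 (Pr x + K0 x) = - l * fn N h j0 (Dv x) := by
  have : (fn N h j0).comp (Pr + K0) = (-l) • (fn N h j0).comp Dv := by
    apply ext_e
    rintro ⟨i, j⟩
    simp only [ContinuousLinearMap.comp_apply, add_apply, smul_apply, smul_eq_mul,
      Pr, K0, Dv, lift_e, map_add, map_smul, fn_e]
    by_cases hj : j = j0
    · subst hj
      simp only [if_true]
      by_cases hp : i + 2 * j = 2
      · have : dd (i,j) = 0 := by
          have h1 : ((i:ℝ) + 2 * j) = 2 := by exact_mod_cast hp
          simp [dd, h1]; norm_num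
        rw [if_pos hp, this]; simp
      · have h0 : (6 - ((i:ℝ) + 2 * j) * (i + 2 * j + 1)) ≠ 0 := by
          intro h0
          have h1 : (((i:ℝ) + 2 * j) - 2) * (((i:ℝ) + 2 * j) + 3) = 0 := by linarith
          rcases mul_eq_zero.1 h1 with h | h
          · apply hp
            have : (i:ℝ) + 2 * j = 2 := by linarith
            exact_mod_cast this
          · have : (0:ℝ) ≤ (i:ℝ) + 2 * j := by positivity
            linarith
        have h1 : dd (i,j) * (6 - ((i:ℝ) + 2 * j) * (i + 2 * j + 1)) = 1 := inv_mul_cancel₀ h0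
        rw [if_neg hp, fn_e, if_pos rfl]
        have h2 : (i:ℝ) * (i-1) / 4096 * dd (i,j) * (N (i-2) / 64^(i-2)) =
            (i:ℝ) * (i-1) * dd (i,j) * N (i-2) / 64^i := by
          rcases i with _ | _ | i
          · simp
          · simp
          · simp only [show i+1+1-2 = i by omega, pow_succ]
            field_simp; norm_num; ring
        rw [h2]
        simp only
        field_simp
        linear_combination (dd (i,j)) * hN i - N i * h1
    · simp only [hj, if_false, mul_zero, add_zero]
      split_ifs
      · simp
      · rw [fn_e, if_neg hj]
  have := congrArg (fun f => f x) this
  simpa [ContinuousLinearMap.comp_apply, map_add] using this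

theorem Mo_rec (i : ℕ) : Mo (i+2) * (i+7) = Mo i * (i+1) := by
  unfold Mo; push_cast
  have : (-1:ℝ)^(i+2) = (-1)^i := by rw [pow_add]; norm_num
  rw [this]
  field_simp
  ring

theorem fS_eig (x : EA) : fS (Pr x + K0 x) = 0 := by
  rw [fS, fn_eig Sg Sg_bd 0 0 _ x]
  · simp
  · intro i
    rcases i with _ | _ | i
    · simp [Sg]
    · simp [Sg]
    · simp only [show i+1+1-2 = i by omega, Sg]
      have : (-1:ℝ)^(i+1+1) = (-1)^i := by rw [pow_succ, pow_succ]; ring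
      rw [this]; push_cast
      field_simp; ring

theorem fT_eig (x : EA) : fT (Pr x + K0 x) = 0 := by
  rw [fT, fn_eig Mo Mo_bd' 1 0 _ x]
  · simp
  · intro i
    rcases i with _ | _ | i
    · simp [Mo]; norm_num
    · simp [Mo]
    · simp only [show i+1+1-2 = i by omega]
      have := Mo_rec i
      push_cast
      linear_combination (-((i:ℝ)+2)) * this

theorem f4_eig (x : EA) : f4 (Pr x + K0 x) = -14 * f4 (Dv x) := by
  rw [f4, fn_eig N4 N4_bd 1 14 _ x]
  intro i
  rcases i with _ | _ | i
  · simp [N4, Mo]; norm_num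
  · simp [N4, Mo]; norm_num
  · simp only [show i+1+1-2 = i by omega, N4, Mo]
    have h1 : (-1:ℝ)^(i+1+1) = (-1)^i := by rw [pow_succ, pow_succ]; ring
    have h2 : (-1:ℝ)^(i+2) = (-1)^i := h1
    have h3 : (-1:ℝ)^(i+1+1+2) = (-1)^i := by rw [pow_add, h1]; norm_num
    simp only [h1, h2, h3]; push_cast
    field_simp; ring

theorem f6_eig (x : EA) : f6 (Pr x + K0 x) = -36 * f6 (Dv x) := by
  rw [f6, fn_eig N6 N6_bd 1 36 _ x]
  intro i
  rcases i with _ | _ | i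
  · simp [N6, Mo]; norm_num
  · simp [N6, Mo]; norm_num
  · simp only [show i+1+1-2 = i by omega, N6, Mo]
    have h1 : (-1:ℝ)^(i+1+1) = (-1)^i := by rw [pow_succ, pow_succ]; ring
    have h2 : (-1:ℝ)^(i+2) = (-1)^i := h1
    have h3 : (-1:ℝ)^(i+1+1+2) = (-1)^i := by rw [pow_add, h1]; norm_num
    have h4 : (-1:ℝ)^(i+4) = (-1)^i := by rw [pow_add]; norm_num
    have h5 : (-1:ℝ)^(i+1+1+4) = (-1)^i := by rw [pow_add, h1]; norm_num
    simp only [h1, h2, h3, h4, h5]; push_cast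
    field_simp; ring

end EA
end Expl


/-! ### Implicit function theorem -/
section IFT
open Filter Topology

theorem ift_abs {E : Type*} [NormedAddCommGroup E] [NormedSpace ℝ E] [CompleteSpace E]
    (Φ : ℝ × E → E) (hΦ : ContDiff ℝ 1 Φ) (x0 : E) (h0 : Φ (0, x0) = 0) (Ld : E →L[ℝ] E)
    (hbij : Function.Bijective Ld) (hder : ∀ x, Φ (0, x) = Ld (x - x0)) :
    ∃ C ε0 : ℝ, 0 ≤ C ∧ 0 < ε0 ∧ ∀ ε, 0 < ε → ε ≤ ε0 → ∃ x, Φ (ε, x) = 0 ∧ ‖x - x0‖ ≤ C * ε := by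
  have cdf : ContDiffAt ℝ 1 Φ (0, x0) := hΦ.contDiffAt
  have hfd : fderiv ℝ Φ (0, x0) ∘L ContinuousLinearMap.inr ℝ ℝ E = Ld := by
    have h1 : HasFDerivAt Φ (fderiv ℝ Φ (0, x0)) (0, x0) :=
      (hΦ.differentiable (by norm_num) _).hasFDerivAt
    have h2 : HasFDerivAt (fun x : E => ((0:ℝ), x)) (ContinuousLinearMap.inr ℝ ℝ E) x0 :=
      hasFDerivAt_prodMk_right _ _
    have h3 : HasFDerivAt (fun x : E => Φ (0, x)) (fderiv ℝ Φ (0, x0) ∘L ContinuousLinearMap.inr ℝ ℝ E) x0 :=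
      h1.comp x0 h2
    have h4 : HasFDerivAt (fun x : E => Φ (0, x)) Ld x0 := by
      simp only [hder]
      have := Ld.hasFDerivAt.comp x0 ((hasFDerivAt_id x0).sub_const x0)
      rw [ContinuousLinearMap.comp_id] at this
      exact this
    exact h3.unique h4
  have hinv : (fderiv ℝ Φ (0, x0) ∘L ContinuousLinearMap.inr ℝ ℝ E).IsInvertible := by
    rw [hfd]
    refine ⟨ContinuousLinearEquiv.ofBijective Ld (LinearMap.ker_eq_bot.2 hbij.1)
      (LinearMap.range_eq_top.2 hbij.2), ?_⟩
    ext x; simp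
  set g := cdf.implicitFunction (by norm_num) hinv with hg
  have hg0 : g 0 = x0 := cdf.implicitFunction_apply_self (by norm_num) hinv
  have e1 : ∀ᶠ x in 𝓝 (0:ℝ), Φ (x, g x) = 0 := by
    have := cdf.eventually_apply_implicitFunction (by norm_num) hinv
    rw [h0] at this; exact this
  have hd := (cdf.hasStrictFDerivAt_implicitFunction (by norm_num) hinv).hasFDerivAt.isBigO_sub
  obtain ⟨C, hC⟩ := hd.bound
  have hC' : ∀ᶠ x in 𝓝 (0:ℝ), ‖g x - x0‖ ≤ C * ‖x‖ := by
    filter_upwards [hC] with x hx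
    rw [← hg] at hx
    simpa [hg0] using hx
  obtain ⟨r, hr, hb⟩ := Metric.eventually_nhds_iff.1 (e1.and hC')
  refine ⟨max C 0, r/2, le_max_right _ _, by positivity, fun ε h1 h2 => ?_⟩
  have := hb (y := ε) (by rw [Real.dist_eq, sub_zero, abs_of_pos h1]; linarith)
  refine ⟨g ε, this.1, this.2.trans ?_⟩
  rw [Real.norm_eq_abs, abs_of_pos h1]
  exact mul_le_mul_of_nonneg_right (le_max_left _ _) h1.le

namespace EA

def cd (q : ℕ × ℕ) : EA →L[ℝ] ℝ := lift (fun p => if p = q then 1 else 0) 1 (fun p => by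
  split_ifs <;> simp)

theorem cd_e (q p : ℕ × ℕ) : cd q (e p) = if p = q then 1 else 0 := lift_e _ _ _ _

theorem Pr_id (x : EA) : x = Pr x + cd (2,0) x • e (2,0) + cd (0,1) x • e (0,1) := by
  have : ContinuousLinearMap.id ℝ EA = Pr + (cd (2,0)).smulRight (e (2,0)) + (cd (0,1)).smulRight (e (0,1)) := by
    apply ext_e
    rintro ⟨i, j⟩
    simp only [add_apply, ContinuousLinearMap.smulRight_apply, cd_e, Pr, lift_e,
      ContinuousLinearMap.id_apply]
    by_cases h : i + 2 * j = 2
    · rw [if_pos h]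
      have : (i = 2 ∧ j = 0) ∨ (i = 0 ∧ j = 1) := by omega
      rcases this with ⟨rfl, rfl⟩ | ⟨rfl, rfl⟩ <;> simp
    · rw [if_neg h, if_neg, if_neg]
      · simp
      · simp; omega
      · simp; omega
  have := congrArg (fun f => f x) this
  simpa using this

theorem fS20 : fS (e (2,0)) ≠ 0 := by
  simp only [fS, fn_e]; norm_num [Sg]
theorem fS01 : fS (e (0,1)) = 0 := by
  simp only [fS, fn_e]; norm_num
theorem fT01 : fT (e (0,1)) ≠ 0 := by
  simp only [fT, fn_e]; norm_num [Mo]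
theorem fT20 : fT (e (2,0)) = 0 := by
  simp only [fT, fn_e]; norm_num

theorem Q_inv : ∃ R : EA →L[ℝ] EA, (∀ x, R (x + K0 x) = x) ∧ ∀ x, R x + K0 (R x) = x := by
  have h : ‖-K0‖ < 1 := by
    rw [norm_neg]; exact lt_of_le_of_lt (lift_norm_le _ _ _) (by norm_num)
  have hu : ((Units.oneSub (-K0) h : (EA →L[ℝ] EA)ˣ) : EA →L[ℝ] EA) = 1 + K0 := by
    simp
  refine ⟨((Units.oneSub (-K0) h)⁻¹ : (EA →L[ℝ] EA)ˣ), fun x => ?_, fun x => ?_⟩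
  · have := congrArg (fun f : EA →L[ℝ] EA => f x) (Units.inv_mul (Units.oneSub (-K0) h))
    rw [hu] at this
    exact this
  · have := congrArg (fun f : EA →L[ℝ] EA => f x) (Units.mul_inv (Units.oneSub (-K0) h))
    rw [hu] at this
    exact this

theorem solv (y : EA) (hS : fS y = 0) (hT : fT y = 0) (a b : ℝ) :
    ∃ x, Pr x + K0 x = y ∧ cd (2,0) x = a ∧ cd (0,1) x = b := by
  obtain ⟨R, -, hR⟩ := Q_inv
  set x := R (y + a • e (2,0) + b • e (0,1)) with hx
  have h1 : x + K0 x = y + a • e (2,0) + b • e (0,1) := hR _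
  have h2 := Pr_id x
  have h3 : Pr x + K0 x = y + (a - cd (2,0) x) • e (2,0) + (b - cd (0,1) x) • e (0,1) := by
    have : Pr x + K0 x = (x + K0 x) - cd (2,0) x • e (2,0) - cd (0,1) x • e (0,1) := by
      nth_rewrite 3 [h2]; abel
    rw [this, h1, sub_smul, sub_smul]; abel
  have h4 := fS_eig x
  have h5 := fT_eig x
  rw [h3] at h4 h5
  simp only [map_add, map_smul, hS, hT, fS01, fT20, smul_eq_mul, mul_zero, add_zero, zero_add] at h4 h5
  have h6 : a - cd (2,0) x = 0 := (mul_eq_zero.1 h4).resolve_right fS20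
  have h7 : b - cd (0,1) x = 0 := (mul_eq_zero.1 h5).resolve_right fT01
  refine ⟨x, ?_, by linarith, by linarith⟩
  rw [h3, h6, h7]; simp

theorem uniq (x : EA) (h : Pr x + K0 x = 0) (ha : cd (2,0) x = 0) (hb : cd (0,1) x = 0) : x = 0 := by
  obtain ⟨R, hR, -⟩ := Q_inv
  have h2 := Pr_id x
  rw [ha, hb] at h2
  simp only [zero_smul, add_zero] at h2
  rw [← h2] at h
  have := hR x
  rw [h, map_zero] at this
  exact this.symm

theorem ift_main (p0 : EA) (a0 b0 c3 c4 : ℝ)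
    (hS : fS (a0 • p0 + b0 • p0^2 + c3 • p0^3 + c4 • p0^4) = 0)
    (hT : fT (a0 • p0 + b0 • p0^2 + c3 • p0^3 + c4 • p0^4) = 0)
    (hdet : fS p0 * fT (p0^2) - fS (p0^2) * fT p0 ≠ 0) :
    ∃ (x0 : EA) (C ε0 : ℝ), 0 ≤ C ∧ 0 < ε0 ∧
      Pr x0 + K0 x0 = a0 • p0 + b0 • p0^2 + c3 • p0^3 + c4 • p0^4 ∧
      ∀ ε, 0 < ε → ε ≤ ε0 → ∃ (x : EA) (a b : ℝ),
        Pr x + K0 x + ε^2 • K1 x = a • (p0 + ε • Dv x) + b • (p0 + ε • Dv x)^2 +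
          c3 • (p0 + ε • Dv x)^3 + c4 • (p0 + ε • Dv x)^4 ∧ ‖x - x0‖ ≤ C * ε := by
  obtain ⟨x0, hx0, ha0, hb0⟩ := solv _ hS hT a0 b0
  set Φ : ℝ × EA → EA := fun q => Pr q.2 + K0 q.2 + q.1^2 • K1 q.2 -
    (cd (2,0) q.2 • (p0 + q.1 • Dv q.2) + cd (0,1) q.2 • (p0 + q.1 • Dv q.2)^2 +
          c3 • (p0 + q.1 • Dv q.2)^3 + c4 • (p0 + q.1 • Dv q.2)^4) with hΦd
  have hΦ : ContDiff ℝ 1 Φ := by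
    fun_prop
  set Ld : EA →L[ℝ] EA := Pr + K0 - (cd (2,0)).smulRight p0 - (cd (0,1)).smulRight (p0^2) with hLd
  have hL : ∀ x, Ld x = Pr x + K0 x - cd (2,0) x • p0 - cd (0,1) x • p0^2 := by
    intro x; simp [hLd]
  have h0 : Φ (0, x0) = 0 := by
    simp [hΦd, hx0, ha0, hb0]
  have hder : ∀ x, Φ (0, x) = Ld (x - x0) := by
    intro x
    rw [hL]
    simp only [hΦd, map_sub, ha0, hb0, zero_smul, add_zero, sub_smul]
    have : Pr x - Pr x0 + (K0 x - K0 x0) = Pr x + K0 x - (a0 • p0 + b0 • p0^2 + c3 • p0^3 + c4 • p0^4) := by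
      rw [← hx0]; abel
    rw [this]
    simp
    abel
  have hbij : Function.Bijective Ld := by
    constructor
    · rw [injective_iff_map_eq_zero]
      intro x hx
      rw [hL] at hx
      have e : Pr x + K0 x = cd (2,0) x • p0 + cd (0,1) x • p0^2 := by
        rw [sub_sub, sub_eq_zero] at hx; exact hx
      have h4 := fS_eig x
      have h5 := fT_eig x
      rw [e] at h4 h5
      simp only [map_add, map_smul, smul_eq_mul] at h4 h5
      have ha : cd (2,0) x = 0 := by
        refine (mul_eq_zero.1 (?_ : cd (2,0) x * (fS p0 * fT (p0^2) - fS (p0^2) * fT p0) = 0)).resolve_right hdet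
        linear_combination fT (p0^2) * h4 - fS (p0^2) * h5
      have hb : cd (0,1) x = 0 := by
        refine (mul_eq_zero.1 (?_ : cd (0,1) x * (fS p0 * fT (p0^2) - fS (p0^2) * fT p0) = 0)).resolve_right hdet
        linear_combination fS p0 * h5 - fT p0 * h4
      apply uniq x _ ha hb
      rw [e, ha, hb]; simp
    · intro y
      set D := fS p0 * fT (p0^2) - fS (p0^2) * fT p0 with hD
      set a := (fS (p0^2) * fT y - fT (p0^2) * fS y) / D with hha
      set b := (fT p0 * fS y - fS p0 * fT y) / D with hhb
      have hSy : fS (y + a • p0 + b • p0^2) = 0 := by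
        simp only [map_add, map_smul, smul_eq_mul, hha, hhb]
        field_simp
        rw [hD]; ring
      have hTy : fT (y + a • p0 + b • p0^2) = 0 := by
        simp only [map_add, map_smul, smul_eq_mul, hha, hhb]
        field_simp
        rw [hD]; ring
      obtain ⟨x, h1, h2, h3⟩ := solv _ hSy hTy a b
      refine ⟨x, ?_⟩
      rw [hL, h1, h2, h3]; abel
  obtain ⟨C, ε0, hC, hε0, H⟩ := ift_abs Φ hΦ x0 h0 Ld hbij hder
  refine ⟨x0, C, ε0, hC, hε0, hx0, fun ε h1 h2 => ?_⟩
  obtain ⟨x, hx, hx'⟩ := H ε h1 h2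
  exact ⟨x, cd (2,0) x, cd (0,1) x, sub_eq_zero.1 hx, hx'⟩

end EA
end IFT


/-! ### Leading order algebra -/
namespace EA

def Z : EA := (64:ℝ) • e (1,0)
def W : EA := e (0,1)
def Az (G B : ℝ) : EA := G • Z + (3 * B) • Z^2 - B • 1
def p0 (G B : ℝ) : EA := Az G B + W

theorem ZW (i j : ℕ) : Z^i * W^j = (64^i : ℝ) • e (i,j) := by
  rw [Z, W, smul_pow, e_pow, e_pow, smul_mul_assoc, e_mul]
  simp

theorem fn_ZW (N : ℕ → ℝ) (h : ∀ i, |N i| ≤ 104) (j0 i j : ℕ) :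
    fn N h j0 (Z^i * W^j) = if j = j0 then N i else 0 := by
  rw [ZW, map_smul, fn_e]
  simp only [smul_eq_mul]
  split_ifs
  · field_simp
  · simp

theorem fn_Wmul (N : ℕ → ℝ) (h : ∀ i, |N i| ≤ 104) (j0 j : ℕ) (hj : j0 < j) (y : EA) :
    fn N h j0 (W^j * y) = 0 := by
  have : (fn N h j0).comp (ContinuousLinearMap.mul ℝ EA (W^j)) = 0 := by
    apply ext_e
    rintro ⟨a, b⟩
    simp only [ContinuousLinearMap.comp_apply, ContinuousLinearMap.mul_apply', W, e_pow, e_mul, fn_e]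
    rw [if_neg]
    · simp
    · simp; omega
  have := congrArg (fun f => f y) this
  simpa using this

theorem A_pow1 (G B : ℝ) : (Az G B)^1 = (-1 * G^0 * B^1) • (Z^0 * W^0) + (1 * G^1 * B^0) • (Z^1 * W^0) + (3 * G^0 * B^1) • (Z^2 * W^0) := by
  simp only [Az, Algebra.smul_def, map_mul, map_add, map_sub, map_neg, map_pow, map_ofNat, map_one]
  ring

theorem A_pow2 (G B : ℝ) : (Az G B)^2 = (1 * G^0 * B^2) • (Z^0 * W^0) + (-2 * G^1 * B^1) • (Z^1 * W^0) + (1 * G^2 * B^0 + -6 * G^0 * B^2) • (Z^2 * W^0) + (6 * G^1 * B^1) • (Z^3 * W^0) + (9 * G^0 * B^2) • (Z^4 * W^0) := by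
  simp only [Az, Algebra.smul_def, map_mul, map_add, map_sub, map_neg, map_pow, map_ofNat, map_one]
  ring

theorem A_pow3 (G B : ℝ) : (Az G B)^3 = (-1 * G^0 * B^3) • (Z^0 * W^0) + (3 * G^1 * B^2) • (Z^1 * W^0) + (-3 * G^2 * B^1 + 9 * G^0 * B^3) • (Z^2 * W^0) + (1 * G^3 * B^0 + -18 * G^1 * B^2) • (Z^3 * W^0) + (9 * G^2 * B^1 + -27 * G^0 * B^3) • (Z^4 * W^0) + (27 * G^1 * B^2) • (Z^5 * W^0) + (27 * G^0 * B^3) • (Z^6 * W^0) := by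
  simp only [Az, Algebra.smul_def, map_mul, map_add, map_sub, map_neg, map_pow, map_ofNat, map_one]
  ring

theorem A_pow4 (G B : ℝ) : (Az G B)^4 = (1 * G^0 * B^4) • (Z^0 * W^0) + (-4 * G^1 * B^3) • (Z^1 * W^0) + (6 * G^2 * B^2 + -12 * G^0 * B^4) • (Z^2 * W^0) + (-4 * G^3 * B^1 + 36 * G^1 * B^3) • (Z^3 * W^0) + (1 * G^4 * B^0 + -36 * G^2 * B^2 + 54 * G^0 * B^4) • (Z^4 * W^0) + (12 * G^3 * B^1 + -108 * G^1 * B^3) • (Z^5 * W^0) + (54 * G^2 * B^2 + -108 * G^0 * B^4) • (Z^6 * W^0) + (108 * G^1 * B^3) • (Z^7 * W^0) + (81 * G^0 * B^4) • (Z^8 * W^0) := by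
  simp only [Az, Algebra.smul_def, map_mul, map_add, map_sub, map_neg, map_pow, map_ofNat, map_one]
  ring

theorem AW_pow0 (G B : ℝ) : (Az G B)^0 * W = (1 * G^0 * B^0) • (Z^0 * W^1) := by
  simp only [Az, Algebra.smul_def, map_mul, map_add, map_sub, map_neg, map_pow, map_ofNat, map_one]
  ring

theorem AW_pow1 (G B : ℝ) : (Az G B)^1 * W = (-1 * G^0 * B^1) • (Z^0 * W^1) + (1 * G^1 * B^0) • (Z^1 * W^1) + (3 * G^0 * B^1) • (Z^2 * W^1) := by
  simp only [Az, Algebra.smul_def, map_mul, map_add, map_sub, map_neg, map_pow, map_ofNat, map_one]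
  ring

theorem AW_pow2 (G B : ℝ) : (Az G B)^2 * W = (1 * G^0 * B^2) • (Z^0 * W^1) + (-2 * G^1 * B^1) • (Z^1 * W^1) + (1 * G^2 * B^0 + -6 * G^0 * B^2) • (Z^2 * W^1) + (6 * G^1 * B^1) • (Z^3 * W^1) + (9 * G^0 * B^2) • (Z^4 * W^1) := by
  simp only [Az, Algebra.smul_def, map_mul, map_add, map_sub, map_neg, map_pow, map_ofNat, map_one]
  ring

theorem AW_pow3 (G B : ℝ) : (Az G B)^3 * W = (-1 * G^0 * B^3) • (Z^0 * W^1) + (3 * G^1 * B^2) • (Z^1 * W^1) + (-3 * G^2 * B^1 + 9 * G^0 * B^3) • (Z^2 * W^1) + (1 * G^3 * B^0 + -18 * G^1 * B^2) • (Z^3 * W^1) + (9 * G^2 * B^1 + -27 * G^0 * B^3) • (Z^4 * W^1) + (27 * G^1 * B^2) • (Z^5 * W^1) + (27 * G^0 * B^3) • (Z^6 * W^1) := by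
  simp only [Az, Algebra.smul_def, map_mul, map_add, map_sub, map_neg, map_pow, map_ofNat, map_one]
  ring

theorem fn1_A (N : ℕ → ℝ) (h : ∀ i, |N i| ≤ 104) (G B : ℝ) :
    fn N h 1 ((Az G B)^1) = 0 ∧ fn N h 1 ((Az G B)^2) = 0 ∧ fn N h 1 ((Az G B)^3) = 0 ∧
    fn N h 1 ((Az G B)^4) = 0 := by
  rw [A_pow1, A_pow2, A_pow3, A_pow4]
  simp only [map_add, map_smul, fn_ZW, zero_ne_one, if_false, smul_zero, add_zero, and_self]

theorem p0_pow1 (G B : ℝ) : (p0 G B)^1 = (Az G B)^1 + (1:ℝ) • ((Az G B)^0 * W) + W^2 * (0) := by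
  simp only [p0, Algebra.smul_def, map_ofNat, map_one]
  ring

theorem fn0_p1 (N : ℕ → ℝ) (h : ∀ i, |N i| ≤ 104) (G B : ℝ) :
    fn N h 0 ((p0 G B)^1) = fn N h 0 ((Az G B)^1) := by
  rw [p0_pow1, map_add, map_add, fn_Wmul N h 0 2 (by norm_num), map_smul, mul_comm _ W]
  have := fn_Wmul N h 0 1 (by norm_num) ((Az G B)^0)
  rw [pow_one] at this
  rw [this]; simp

theorem fn1_p1 (N : ℕ → ℝ) (h : ∀ i, |N i| ≤ 104) (G B : ℝ) :
    fn N h 1 ((p0 G B)^1) = 1 * fn N h 1 ((Az G B)^0 * W) := by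
  obtain ⟨h1, h2, h3, h4⟩ := fn1_A N h G B
  rw [p0_pow1, map_add, map_add, fn_Wmul N h 1 2 (by norm_num), map_smul, h1]; simp

theorem p0_pow2 (G B : ℝ) : (p0 G B)^2 = (Az G B)^2 + (2:ℝ) • ((Az G B)^1 * W) + W^2 * (1) := by
  simp only [p0, Algebra.smul_def, map_ofNat, map_one]
  ring

theorem fn0_p2 (N : ℕ → ℝ) (h : ∀ i, |N i| ≤ 104) (G B : ℝ) :
    fn N h 0 ((p0 G B)^2) = fn N h 0 ((Az G B)^2) := by
  rw [p0_pow2, map_add, map_add, fn_Wmul N h 0 2 (by norm_num), map_smul, mul_comm _ W]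
  have := fn_Wmul N h 0 1 (by norm_num) ((Az G B)^1)
  rw [pow_one] at this
  rw [this]; simp

theorem fn1_p2 (N : ℕ → ℝ) (h : ∀ i, |N i| ≤ 104) (G B : ℝ) :
    fn N h 1 ((p0 G B)^2) = 2 * fn N h 1 ((Az G B)^1 * W) := by
  obtain ⟨h1, h2, h3, h4⟩ := fn1_A N h G B
  rw [p0_pow2, map_add, map_add, fn_Wmul N h 1 2 (by norm_num), map_smul, h2]; simp

theorem p0_pow3 (G B : ℝ) : (p0 G B)^3 = (Az G B)^3 + (3:ℝ) • ((Az G B)^2 * W) + W^2 * (3 * Az G B + W) := by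
  simp only [p0, Algebra.smul_def, map_ofNat, map_one]
  ring

theorem fn0_p3 (N : ℕ → ℝ) (h : ∀ i, |N i| ≤ 104) (G B : ℝ) :
    fn N h 0 ((p0 G B)^3) = fn N h 0 ((Az G B)^3) := by
  rw [p0_pow3, map_add, map_add, fn_Wmul N h 0 2 (by norm_num), map_smul, mul_comm _ W]
  have := fn_Wmul N h 0 1 (by norm_num) ((Az G B)^2)
  rw [pow_one] at this
  rw [this]; simp

theorem fn1_p3 (N : ℕ → ℝ) (h : ∀ i, |N i| ≤ 104) (G B : ℝ) :
    fn N h 1 ((p0 G B)^3) = 3 * fn N h 1 ((Az G B)^2 * W) := by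
  obtain ⟨h1, h2, h3, h4⟩ := fn1_A N h G B
  rw [p0_pow3, map_add, map_add, fn_Wmul N h 1 2 (by norm_num), map_smul, h3]; simp

theorem p0_pow4 (G B : ℝ) : (p0 G B)^4 = (Az G B)^4 + (4:ℝ) • ((Az G B)^3 * W) + W^2 * (6 * (Az G B)^2 + 4 * Az G B * W + W^2) := by
  simp only [p0, Algebra.smul_def, map_ofNat, map_one]
  ring

theorem fn0_p4 (N : ℕ → ℝ) (h : ∀ i, |N i| ≤ 104) (G B : ℝ) :
    fn N h 0 ((p0 G B)^4) = fn N h 0 ((Az G B)^4) := by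
  rw [p0_pow4, map_add, map_add, fn_Wmul N h 0 2 (by norm_num), map_smul, mul_comm _ W]
  have := fn_Wmul N h 0 1 (by norm_num) ((Az G B)^3)
  rw [pow_one] at this
  rw [this]; simp

theorem fn1_p4 (N : ℕ → ℝ) (h : ∀ i, |N i| ≤ 104) (G B : ℝ) :
    fn N h 1 ((p0 G B)^4) = 4 * fn N h 1 ((Az G B)^3 * W) := by
  obtain ⟨h1, h2, h3, h4⟩ := fn1_A N h G B
  rw [p0_pow4, map_add, map_add, fn_Wmul N h 1 2 (by norm_num), map_smul, h4]; simp

theorem fS_p1 (G B : ℝ) : fS ((p0 G B)^1) = 8/5*B := by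
  rw [fS, fn0_p1, A_pow1]
  simp only [map_add, map_smul, fn_ZW, smul_eq_mul, if_true, Sg]
  norm_num <;> ring

theorem fS_p2 (G B : ℝ) : fS ((p0 G B)^2) = 8/15*G^2+32/35*B^2 := by
  rw [fS, fn0_p2, A_pow2]
  simp only [map_add, map_smul, fn_ZW, smul_eq_mul, if_true, Sg]
  norm_num <;> ring

theorem fS_p3 (G B : ℝ) : fS ((p0 G B)^3) = 88/35*G^2*B+96/35*B^3 := by
  rw [fS, fn0_p3, A_pow3]
  simp only [map_add, map_smul, fn_ZW, smul_eq_mul, if_true, Sg]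
  norm_num <;> ring

theorem fS_p4 (G B : ℝ) : fS ((p0 G B)^4) = 16/35*G^4+256/35*G^2*B^2+256/77*B^4 := by
  rw [fS, fn0_p4, A_pow4]
  simp only [map_add, map_smul, fn_ZW, smul_eq_mul, if_true, Sg]
  norm_num <;> ring

theorem fT_p1 (G B : ℝ) : fT ((p0 G B)^1) = 16/15 := by
  rw [fT, fn1_p1, AW_pow0]
  simp only [map_add, map_smul, fn_ZW, smul_eq_mul, if_true, Mo]
  norm_num <;> ring

theorem fT_p2 (G B : ℝ) : fT ((p0 G B)^2) = -128/105*B := by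
  rw [fT, fn1_p2, AW_pow1]
  simp only [map_add, map_smul, fn_ZW, smul_eq_mul, if_true, Mo]
  norm_num <;> ring

theorem fT_p3 (G B : ℝ) : fT ((p0 G B)^3) = 16/35*G^2+64/35*B^2 := by
  rw [fT, fn1_p3, AW_pow2]
  simp only [map_add, map_smul, fn_ZW, smul_eq_mul, if_true, Mo]
  norm_num <;> ring

theorem fT_p4 (G B : ℝ) : fT ((p0 G B)^4) = -2048/1155*B^3 := by
  rw [fT, fn1_p4, AW_pow3]
  simp only [map_add, map_smul, fn_ZW, smul_eq_mul, if_true, Mo]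
  norm_num <;> ring

theorem f4_p1 (G B : ℝ) : f4 ((p0 G B)^1) = 0 := by
  rw [f4, fn1_p1, AW_pow0]
  simp only [map_add, map_smul, fn_ZW, smul_eq_mul, if_true, N4, Mo]
  norm_num <;> ring

theorem f4_p2 (G B : ℝ) : f4 ((p0 G B)^2) = 128/105*B := by
  rw [f4, fn1_p2, AW_pow1]
  simp only [map_add, map_smul, fn_ZW, smul_eq_mul, if_true, N4, Mo]
  norm_num <;> ring

theorem f4_p3 (G B : ℝ) : f4 ((p0 G B)^3) = 64/105*G^2-256/385*B^2 := by
  rw [f4, fn1_p3, AW_pow2]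
  simp only [map_add, map_smul, fn_ZW, smul_eq_mul, if_true, N4, Mo]
  norm_num <;> ring

theorem f4_p4 (G B : ℝ) : f4 ((p0 G B)^4) = 256/165*G^2*B+1024/455*B^3 := by
  rw [f4, fn1_p4, AW_pow3]
  simp only [map_add, map_smul, fn_ZW, smul_eq_mul, if_true, N4, Mo]
  norm_num <;> ring

theorem f6_p1 (G B : ℝ) : f6 ((p0 G B)^1) = 0 := by
  rw [f6, fn1_p1, AW_pow0]
  simp only [map_add, map_smul, fn_ZW, smul_eq_mul, if_true, N6, Mo]
  norm_num <;> ring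

theorem f6_p2 (G B : ℝ) : f6 ((p0 G B)^2) = 0 := by
  rw [f6, fn1_p2, AW_pow1]
  simp only [map_add, map_smul, fn_ZW, smul_eq_mul, if_true, N6, Mo]
  norm_num <;> ring

theorem f6_p3 (G B : ℝ) : f6 ((p0 G B)^3) = 6144/5005*B^2 := by
  rw [f6, fn1_p3, AW_pow2]
  simp only [map_add, map_smul, fn_ZW, smul_eq_mul, if_true, N6, Mo]
  norm_num <;> ring

theorem f6_p4 (G B : ℝ) : f6 ((p0 G B)^4) = 8192/5005*G^2*B := by
  rw [f6, fn1_p4, AW_pow3]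
  simp only [map_add, map_smul, fn_ZW, smul_eq_mul, if_true, N6, Mo]
  norm_num <;> ring

end EA


/-! ### Non-triviality criterion -/
section Nontriv
open Polynomial

theorem Lq_22 (s : ℝ) : (Lq 2 2).eval s = 24 := by
  have : Rod 2 = X^4 - C 2 * X^2 + C 1 := by
    simp only [Rod, map_ofNat, map_one]; ring
  rw [Lq, this]
  simp only [iterate_derivative_sub, iterate_map_add, iterate_derivative_C_mul,
    iterate_derivative_X_pow_eq_C_mul, iterate_derivative_C (show 0 < 2 + 2 by norm_num)]
  simp [Nat.descFactorial]

end Nontriv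

theorem Yang2 (φ : ℝ) : Yang 2 φ = Real.cos (2 * φ) := by simp [Yang]

theorem coeff_Y2 (n : ℕ) (hn : 2 < n) (m : ℤ) (hm : m ∈ Finset.Icc (-2 : ℤ) 2) :
    coeff (Ynm 2 m) n 2 = 0 := by
  have e : Ynm 2 m = fun θ φ => Yth 2 m.natAbs θ * Yang m φ := by
    ext θ φ; exact Ynm_eq 2 m θ φ
  rw [e, coeff_sep]
  have hs : ∫ φ in (0:ℝ)..(2*Real.pi), Yang m φ * Yang 2 φ =
      ∫ φ in (0:ℝ)..(2*Real.pi), (Real.cos (2*φ))^1 * Yang m φ := by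
    congr 1; ext φ; rw [Yang2]; ring
  rw [hs]
  rw [Finset.mem_Icc] at hm
  have hc : m = -2 ∨ m = -1 ∨ m = 0 ∨ m = 1 ∨ m = 2 := by omega
  rcases hc with rfl | rfl | rfl | rfl | rfl
  · rw [phi_Yang 1 (-2) (by left; norm_num), mul_zero]
  · rw [phi_Yang 1 (-1) (by left; norm_num), mul_zero]
  · have : ∫ φ in (0:ℝ)..(2*Real.pi), (Real.cos (2*φ))^1 * Yang 0 φ = 0 := by
      have := int_cos 2 (by norm_num)
      rw [← this]; congr 1; ext φ; simp [Yang]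
    rw [this, mul_zero]
  · rw [phi_Yang 1 1 (by right; left; norm_num), mul_zero]
  · have h := EA.theta_int 0 1 1 n
    rw [mono_orth n 0 2 2 le_rfl (by omega)] at h
    have : ∫ θ in (0:ℝ)..Real.pi, Yth 2 (2:ℤ).natAbs θ * Yth n (2:ℤ).natAbs θ * Real.sin θ = 0 := by
      have h3 : ∫ θ in (0:ℝ)..Real.pi, Yth 2 (2:ℤ).natAbs θ * Yth n (2:ℤ).natAbs θ * Real.sin θ =
         (Ycst 2 2 * 24) * ∫ θ in (0:ℝ)..Real.pi, (Real.cos θ)^0 * (Real.sin θ)^(2*1) * Yth n (2*1) θ * Real.sin θ := by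
        rw [← intervalIntegral.integral_const_mul]
        congr 1; ext θ
        have : Yth 2 (2:ℤ).natAbs θ = Ycst 2 2 * (Real.sin θ)^2 * 24 := by
          rw [show (2:ℤ).natAbs = 2 by rfl, Yth, Lq_22, sq_abs]
        rw [this, show (2:ℤ).natAbs = 2 * 1 by rfl]; ring
      rw [h3, h]; simp
    rw [this, zero_mul]

theorem coeff_zonal (f : ℝ → ℝ) (n : ℕ) : coeff (fun θ _ => f θ) n 2 = 0 := by
  have : (fun θ _ => f θ : SphereFun) = fun θ φ => f θ * (fun _ => 1) φ := by ext; simp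
  rw [this, coeff_sep]
  have h := int_cos 2 (by norm_num)
  simp only [one_mul, Yang2]
  push_cast at h
  rw [h, mul_zero]

theorem nontriv {u : SphereFun} (hu : Continuous (Function.uncurry u)) (n : ℕ) (hn : 2 < n)
    (h : coeff u n 2 ≠ 0) : SphNontrivial u := by
  rintro ⟨z, c, hz, hc⟩
  apply h
  have hY : ∀ m, Continuous (Function.uncurry (fun θ φ => c m * Ynm 2 m θ φ)) := fun m =>
    (Y_cont 2 m).const_mul (c m)
  have hz' : Continuous (fun θ => u θ 0 - ∑ m ∈ Finset.Icc (-2 : ℤ) 2, c m * Ynm 2 m θ 0) := by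
    refine (cont_left hu 0).sub ?_
    exact continuous_finsetSum _ (fun m _ => cont_left (hY m) 0)
  have e1 : coeff u n 2 = coeff (fun θ φ => (u θ 0 - ∑ m ∈ Finset.Icc (-2 : ℤ) 2, c m * Ynm 2 m θ 0) +
      ∑ m ∈ Finset.Icc (-2 : ℤ) 2, c m * Ynm 2 m θ φ) n 2 := by
    apply coeff_congr
    intro θ hθ φ
    have h1 := hc θ hθ φ
    have h2 := hc θ hθ 0
    have h3 := hz θ φ 0
    rw [h1, h2, h3]; ring
  have key : ∀ S : Finset ℤ, S ⊆ Finset.Icc (-2:ℤ) 2 →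
      coeff (fun θ φ => ∑ m ∈ S, c m * Ynm 2 m θ φ) n 2 = 0 := by
    intro S
    induction S using Finset.induction_on with
    | empty => intro _; simp [coeff, sInner]
    | insert a S ha ih =>
      intro hS
      have : (fun θ φ => ∑ m ∈ insert a S, c m * Ynm 2 m θ φ : SphereFun) =
        fun θ φ => (fun θ φ => c a * Ynm 2 a θ φ) θ φ + (fun θ φ => ∑ m ∈ S, c m * Ynm 2 m θ φ) θ φ := by
        ext θ φ; rw [Finset.sum_insert ha]
      rw [this, coeff_add (v := fun θ φ => ∑ m ∈ S, c m * Ynm 2 m θ φ) (hY a) (continuous_finsetSum _ (fun m _ => hY m)),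
        ih (fun x hx => hS (Finset.mem_insert_of_mem hx)), coeff_smul,
        coeff_Y2 n hn a (hS (Finset.mem_insert_self _ _))]
      simp
  have h1 := coeff_add (u := fun θ _ => u θ 0 - ∑ m ∈ Finset.Icc (-2 : ℤ) 2, c m * Ynm 2 m θ 0)
    (v := fun θ φ => ∑ m ∈ Finset.Icc (-2 : ℤ) 2, c m * Ynm 2 m θ φ)
    (hz'.comp continuous_fst) (continuous_finsetSum _ (fun m _ => hY m)) n 2
  rw [e1, h1, coeff_zonal, key _ (Finset.Subset.refl _), add_zero]

theorem nonzonal {u : SphereFun} (h : SphNontrivial u) : ¬ ZonalOn u := by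
  intro hz
  apply h
  refine ⟨fun θ _ => u θ 0, 0, fun _ _ _ => rfl, ?_⟩
  intro θ hθ φ
  simp [hz θ hθ φ 0]

namespace EA

theorem sextic {u v : ℝ} (hu : 0 ≤ u) (hv : 0 < v) :
    16/45*u^3 - 128/105*u^2*v + 384/455*u*v^2 + 4608/5005*v^3 ≠ 0 := by
  apply ne_of_gt
  have h1 : 0 ≤ (u - 187/100*v)^2 * u := by positivity
  have h2 : 0 ≤ (u - 187/100*v)^2 * v := by positivity
  have h3 : 0 ≤ u * v^2 := by positivity
  have h4 : 0 < v^3 := by positivity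
  nlinarith

theorem solve (G B : ℝ) (hGB : 0 < G^2 + B^2) (T4 T6 : ℝ) (hT : B = 0 → T6 = 0) :
    ∃ a0 b0 k3 k4 : ℝ,
      fS (a0 • p0 G B + b0 • (p0 G B)^2 + k3 • (p0 G B)^3 + k4 • (p0 G B)^4) = 0 ∧
      fT (a0 • p0 G B + b0 • (p0 G B)^2 + k3 • (p0 G B)^3 + k4 • (p0 G B)^4) = 0 ∧
      f4 (a0 • p0 G B + b0 • (p0 G B)^2 + k3 • (p0 G B)^3 + k4 • (p0 G B)^4) = T4 ∧
      f6 (a0 • p0 G B + b0 • (p0 G B)^2 + k3 • (p0 G B)^3 + k4 • (p0 G B)^4) = T6 := by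
  have hS1 := fS_p1 G B
  have hT1 := fT_p1 G B
  have h41 := f4_p1 G B
  have h61 := f6_p1 G B
  rw [pow_one] at hS1 hT1 h41 h61
  simp only [map_add, map_smul, smul_eq_mul, hS1, hT1, h41, h61, fS_p2, fS_p3, fS_p4,
    fT_p2, fT_p3, fT_p4, f4_p2, f4_p3, f4_p4, f6_p2, f6_p3, f6_p4]
  by_cases hB : B = 0
  · have h6 := hT hB
    subst hB
    have hG : G ≠ 0 := by rintro rfl; simp at hGB
    refine ⟨-(3/7)*G^2*(T4*105/64/G^2), 0, T4*105/64/G^2, 0, ?_, ?_, ?_, ?_⟩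
    · ring
    · ring
    · field_simp; ring
    · rw [h6]; ring
  · have hs := sextic (u := G^2) (v := B^2) (by positivity) (by positivity)
    set s1 := (16/45*(G^2)^3 - 128/105*(G^2)^2*(B^2) + 384/455*(G^2)*(B^2)^2 + 4608/5005*(B^2)^3) with hs1
    set c3 : ℝ → ℝ := fun x => (T6 - 8192/5005*G^2*B * x) / (6144/5005*B^2) with hc3
    set b : ℝ → ℝ := fun x => (T4 - (64/105*G^2-256/385*B^2) * c3 x -
      (256/165*G^2*B+1024/455*B^3) * x) / (128/105*B) with hb
    set a : ℝ → ℝ := fun x => -(15/16) * (-128/105*B * b x + (16/35*G^2+64/35*B^2) * c3 x +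
      (-2048/1155*B^3) * x) with ha
    set S : ℝ → ℝ := fun x => a x * (8/5*B) + b x * (8/15*G^2+32/35*B^2) +
      c3 x * (88/35*G^2*B+96/35*B^3) + x * (16/35*G^4+256/35*G^2*B^2+256/77*B^4) with hS
    have hlin : ∀ x, S x = S 0 + x * (s1 / B^2) := by
      intro x
      simp only [hS, ha, hb, hc3, hs1]
      field_simp
      ring
    set x := - S 0 * B^2 / s1 with hx
    refine ⟨a x, b x, c3 x, x, ?_, ?_, ?_, ?_⟩
    · have := hlin x
      have h2 : S 0 + x * (s1 / B^2) = 0 := by rw [hx]; field_simp; ring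
      rw [h2] at this
      exact this
    · simp only [ha]; ring
    · have : b x * (128/105*B) = T4 - (64/105*G^2-256/385*B^2) * c3 x -
          (256/165*G^2*B+1024/455*B^3) * x := by
        simp only [hb]; field_simp
      linear_combination this
    · have : c3 x * (6144/5005*B^2) = T6 - 8192/5005*G^2*B * x := by
        simp only [hc3]; field_simp
      linear_combination this

theorem det_ne (G B : ℝ) (hGB : 0 < G^2 + B^2) :
    fS (p0 G B) * fT ((p0 G B)^2) - fS ((p0 G B)^2) * fT (p0 G B) ≠ 0 := by
  have hS1 := fS_p1 G B
  have hT1 := fT_p1 G B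
  rw [pow_one] at hS1 hT1
  rw [hS1, hT1, fS_p2, fT_p2]
  apply ne_of_lt
  nlinarith [sq_nonneg G, sq_nonneg B]

theorem ev_p0 {ε : ℝ} (hε : |ε| ≤ 1/4096) (G B θ φ : ℝ) :
    ev ε hε θ φ (Az G B) = G * Real.cos θ + B * (3 * (Real.cos θ)^2 - 1) := by
  have h1 : ev ε hε θ φ 1 = 1 := by rw [one_def, ev_e]; simp [mono]
  have h2 : ev ε hε θ φ Z = Real.cos θ := by
    rw [Z, map_smul, ev_e]; simp [mono]; field_simp
  simp only [Az, pow_two, map_add, map_sub, map_smul, ev_mul, h1, h2, smul_eq_mul]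
  ring

theorem p0_e (G B : ℝ) : p0 G B = (64 * G) • e (1,0) + (12288 * B) • e (2,0) - B • e 0 + e (0,1) := by
  have : Z^2 = (4096:ℝ) • e (2,0) := by
    have := ZW 2 0
    rw [pow_zero, mul_one] at this
    rw [this]; norm_num
  rw [p0, Az, this, Z, W, one_def, smul_smul, smul_smul]
  congr 4 <;> ring

theorem lap_p0 {ε : ℝ} (hε : |ε| ≤ 1/4096) (G B θ φ : ℝ) (hs : Real.sin θ ≠ 0) :
    lapS (Fu ε (p0 G B)) θ φ + 6 * Fu ε (p0 G B) θ φ = 4 * (G * Real.cos θ) := by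
  obtain ⟨C, hC⟩ := lapev_bd hε θ φ hs
  have h : ∀ b, lapS (Fu ε b) θ φ = lift (fun p => lapm ε p θ φ) C hC b := fun b =>
    (lap_Fu hε b θ φ hs).unique (lift_hasSum _ C hC b)
  rw [h, ← ev_apply hε, p0_e]
  simp only [map_add, map_sub, map_smul, lift_e, ev_e, smul_eq_mul, lapm, mono]
  norm_num
  ring

theorem coC_p0 {ε : ℝ} (hε : |ε| ≤ 1/4096) (G B : ℝ) (n : ℕ) (hn : 2 < n) (hm : |(2:ℤ)| ≤ n) :
    coC ε hε n 2 hm (p0 G B) = 0 := by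
  rw [p0_e]
  simp only [map_add, map_sub, map_smul, coC_e, smul_eq_mul]
  rw [coeff_mono_zero ε 1 0 n 2 (by omega), coeff_mono_zero ε 2 0 n 2 (by omega),
    coeff_mono_zero ε 0 1 n 2 (by omega), show (0 : ℕ × ℕ) = (0,0) from rfl,
    coeff_mono_zero ε 0 0 n 2 (by omega)]
  simp

theorem Dv_norm (x : EA) : ‖Dv x‖ ≤ ‖x‖ := by
  have h : ‖Dv‖ ≤ 1 := lift_norm_le _ _ _
  have := Dv.le_of_opNorm_le h x
  simpa using this

theorem fn_bd (N : ℕ → ℝ) (h : ∀ i, |N i| ≤ 104) (j0 : ℕ) (x : EA) : |fn N h j0 x| ≤ 104 * ‖x‖ := by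
  have h : ‖fn N h j0‖ ≤ 104 := lift_norm_le _ _ _
  exact (fn N _ j0).le_of_opNorm_le h x

theorem coef_asym (G B : ℝ) (x0 : EA) (C : ℝ) (hC : 0 ≤ C) (n : ℕ) (hn : 2 < n) (K : ℝ) (N : ℕ → ℝ)
    (h : ∀ i, |N i| ≤ 104)
    (hc : ∀ ε i, coeff (mono ε (i,1)) n 2 = ε * K * (N i / 64^i)) :
    ∃ M, 0 ≤ M ∧ ∀ ε x, 0 < ε → |ε| ≤ 1/4096 → ‖x - x0‖ ≤ C * ε →
      |coeff (Fu ε (p0 G B + ε • Dv x)) n 2 - K * fn N h 1 (Dv x0) * ε^2| ≤ M * ε^3 := by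
  refine ⟨(4096^2 * ((n+1) / 8^n * (2 * Real.pi^2))) * (‖x0‖ + C) + |K| * (104 * C), by positivity, ?_⟩
  intro ε x h0 hε hx
  have hm : |(2:ℤ)| ≤ n := by simp; exact_mod_cast hn.le
  have e1 : coeff (Fu ε (p0 G B + ε • Dv x)) n 2 = ε * coeff (Fu ε (Dv x)) n 2 := by
    rw [← coC_apply hε n 2 hm, ← coC_apply hε n 2 hm, map_add, map_smul, coC_p0 hε G B n hn hm]
    simp
  have e2 := co42_bd hε n K N h hn.le (hc ε) (Dv x)
  have e3 := fn_bd N h 1 (Dv (x - x0))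
  have e4 := Dv_norm (x - x0)
  have e5 := Dv_norm x
  have hle : ε ≤ 1 := by rw [abs_of_pos h0] at hε; linarith
  have e6 : ‖x‖ ≤ ‖x0‖ + C := by
    have : ‖x‖ ≤ ‖x0‖ + ‖x - x0‖ := norm_le_norm_add_norm_sub' x x0
    nlinarith
  have e7 : coeff (Fu ε (p0 G B + ε • Dv x)) n 2 - K * fn N h 1 (Dv x0) * ε^2 =
     ε * (coeff (Fu ε (Dv x)) n 2 - ε * (K * fn N h 1 (Dv x))) + ε^2 * (K * fn N h 1 (Dv (x - x0))) := by
    rw [e1, map_sub, map_sub]; ring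
  rw [e7]
  refine (abs_add_le _ _).trans ?_
  rw [abs_mul, abs_mul, abs_mul K, abs_of_pos h0, abs_of_nonneg (sq_nonneg ε)]
  have b1 : |coeff (Fu ε (Dv x)) n 2 - ε * (K * fn N h 1 (Dv x))| ≤
      (4096^2 * ((n+1) / 8^n * (2 * Real.pi^2))) * ε^2 * (‖x0‖ + C) :=
    e2.trans (by gcongr; exact e5.trans e6)
  have b2 : |fn N h 1 (Dv (x - x0))| ≤ 104 * (C * ε) :=
    e3.trans (by gcongr; exact e4.trans hx)
  calc _ ≤ ε * ((4096^2 * ((n+1) / 8^n * (2 * Real.pi^2))) * ε^2 * (‖x0‖ + C)) + ε^2 * (|K| * (104 * (C * ε))) := by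
        gcongr
    _ = _ := by ring

end EA


theorem big_aux {ε M t c : ℝ} (hε0 : 0 < ε) (h1 : |c + t * ε^2| ≤ M * ε^3) (h2 : ε * M < |t|) : c ≠ 0 := by
  intro h0
  rw [h0, zero_add, abs_mul, abs_of_pos (by positivity : 0 < ε^2)] at h1
  have h3 : 0 < ε^2 := by positivity
  have h4 : M * ε^3 = (ε * M) * ε^2 := by ring
  rw [h4] at h1
  exact absurd (le_of_mul_le_mul_right h1 h3) (not_le.2 h2)

theorem lin_aux {K : ℝ} (hK : K ≠ 0) (t n : ℝ) : K * (-(t / K) / n) = -((1/n) * t) := by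
  have : t / K * K = t := div_mul_cancel₀ t hK
  calc K * (-(t / K) / n) = -((1/n) * (t / K * K)) := by ring
    _ = _ := by rw [this]

set_option maxHeartbeats 1000000

/-- Near the zonal Rossby–Haurwitz stream function `βY₂⁰ + γY₁⁰`
there exist real-analytic, non-zonal, non-trivial steady solutions of the Euler
equations on the `γ`-rotating sphere, arbitrarily close in the Gevrey norm. -/
theorem nonzonal_steady_near_RossbyHaurwitz (β γ : ℝ) (hβγ : 0 < β^2 + γ^2) :
    ∃ (cgb lam M ε₀ : ℝ), 0 < cgb ∧ 0 < lam ∧ 0 < M ∧ 0 < ε₀ ∧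
      ∀ ε : ℝ, 0 < ε → ε ≤ ε₀ →
        ∃ (Ψ : SphereFun) (F : ℝ → ℝ),
          SphSmooth Ψ ∧ PeriodicPhi Ψ ∧
          RealAnalyticSphere Ψ ∧ (∀ x : ℝ, AnalyticAt ℝ F x) ∧
          (∀ θ ∈ Set.Ioo (0:ℝ) Real.pi, ∀ φ : ℝ,
            lapS Ψ θ φ - 4*γ*Ynm 1 0 θ φ = F (Ψ θ φ)) ∧
          gevNormSq lam (fun θ φ => β*Ynm 2 0 θ φ + γ*Ynm 1 0 θ φ - Ψ θ φ)
            ≤ ENNReal.ofReal ((M*ε)^2) ∧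
          |coeff Ψ 6 2 + β^2 * (1/36) * (45/(11*Real.pi*Real.sqrt 182)) * cgb * ε^2|
            ≤ M*ε^3 ∧
          |coeff Ψ 4 2 + (1/14) * ((3*Real.sqrt 3/(154*Real.pi))*(11*γ^2 - 5*β^2)
              - β^2 * (1/(7*Real.pi)) * (30*γ^2/(7*γ^2+15*β^2))) * cgb * ε^2|
            ≤ M*ε^3 ∧
          ¬ ZonalOn Ψ ∧ SphNontrivial Ψ := by
  have hpi := Real.pi_pos
  have hc1 : 0 < c1 := Real.sqrt_pos.2 (by positivity)
  have hc2 : 0 < c2 := Real.sqrt_pos.2 (by positivity)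
  have hk4 : 0 < k4 * Real.pi := mul_pos (Real.sqrt_pos.2 (by positivity)) hpi
  have hk6 : 0 < k6 * Real.pi := mul_pos (Real.sqrt_pos.2 (by positivity)) hpi
  set G := γ * c1 with hG
  set B := β * c2 with hB
  have hGB : 0 < G^2 + B^2 := by
    by_contra hcon
    have h1 : G^2 = 0 := by nlinarith [sq_nonneg G, sq_nonneg B]
    have h2 : B^2 = 0 := by nlinarith [sq_nonneg G, sq_nonneg B]
    have h3 : γ = 0 := by
      rcases mul_eq_zero.1 (pow_eq_zero_iff (two_ne_zero)|>.1 h1) with h | h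
      · exact h
      · exact absurd h hc1.ne'
    have h4 : β = 0 := by
      rcases mul_eq_zero.1 (pow_eq_zero_iff (two_ne_zero)|>.1 h2) with h | h
      · exact h
      · exact absurd h hc2.ne'
    rw [h3, h4] at hβγ; norm_num at hβγ
  set t6 : ℝ := β^2 * (45/(11*Real.pi*Real.sqrt 182)) with ht6
  set t4 : ℝ := (3*Real.sqrt 3/(154*Real.pi))*(11*γ^2 - 5*β^2)
              - β^2 * (1/(7*Real.pi)) * (30*γ^2/(7*γ^2+15*β^2)) with ht4
  have hB0 : B = 0 → β = 0 := fun h => (mul_eq_zero.1 h).resolve_right hc2.ne'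
  obtain ⟨a0, b0, q3, q4, hS, hT, h4, h6⟩ := EA.solve G B hGB (t4 / (k4 * Real.pi)) (t6 / (k6 * Real.pi))
    (fun h => by rw [ht6, hB0 h]; simp)
  obtain ⟨x0, C, ε1, hC, hε1, hx0, H⟩ := EA.ift_main (EA.p0 G B) a0 b0 q3 q4 hS hT (EA.det_ne G B hGB)
  rw [← hx0, EA.f4_eig] at h4
  rw [← hx0, EA.f6_eig] at h6
  obtain ⟨M4, hM4, H4⟩ := EA.coef_asym G B x0 C hC 4 (by norm_num) (k4 * Real.pi) N4 EA.N4_bd EA.coeff42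
  obtain ⟨M6, hM6, H6⟩ := EA.coef_asym G B x0 C hC 6 (by norm_num) (k6 * Real.pi) N6 EA.N6_bd EA.coeff62
  have v4 : (k4 * Real.pi) * EA.fn N4 EA.N4_bd 1 (EA.Dv x0) = - ((1/14) * t4) := by
    have : EA.f4 (EA.Dv x0) = - (t4 / (k4 * Real.pi)) / 14 := by linarith
    rw [show EA.fn N4 EA.N4_bd 1 = EA.f4 from rfl, this]
    exact lin_aux hk4.ne' t4 14
  have v6 : (k6 * Real.pi) * EA.fn N6 EA.N6_bd 1 (EA.Dv x0) = - ((1/36) * t6) := by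
    have : EA.f6 (EA.Dv x0) = - (t6 / (k6 * Real.pi)) / 36 := by linarith
    rw [show EA.fn N6 EA.N6_bd 1 = EA.f6 from rfl, this]
    exact lin_aux hk6.ne' t6 36
  rw [v4] at H4
  rw [v6] at H6
  have hgC : 0 ≤ gevC := tsum_nonneg (fun p => by positivity)
  set Kg : ℝ := 2 * Real.pi^2 * (4096 + ‖x0‖ + C) with hKg
  have hKg0 : 0 ≤ Kg := by positivity
  set M : ℝ := M4 + M6 + Real.sqrt gevC * Kg + 1 with hM
  have hM0 : 0 < M := by positivity
  have hM4' : M4 ≤ M := by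
    have : 0 ≤ Real.sqrt gevC * Kg := by positivity
    rw [hM]; linarith
  have hM6' : M6 ≤ M := by
    have : 0 ≤ Real.sqrt gevC * Kg := by positivity
    rw [hM]; linarith
  have ht : 0 < max |t6| |t4| := by
    by_cases hb : β = 0
    · have hg : γ ≠ 0 := by rintro rfl; rw [hb] at hβγ; norm_num at hβγ
      refine lt_of_lt_of_le ?_ (le_max_right _ _)
      rw [abs_pos, ht4, hb]
      have : 0 < γ^2 := by positivity
      have : 0 < (3*Real.sqrt 3/(154*Real.pi))*(11*γ^2) := by positivity
      apply ne_of_gt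
      simpa using this
    · refine lt_of_lt_of_le ?_ (le_max_left _ _)
      rw [abs_pos, ht6]
      have : 0 < β^2 := by positivity
      positivity
  refine ⟨1, 1, M, min (min ε1 (1/4096)) (max |t6| |t4| / (72 * M)), one_pos, one_pos, hM0,
    by positivity, ?_⟩
  intro ε hε0 hεle
  have hεa : ε ≤ ε1 := hεle.trans ((min_le_left _ _).trans (min_le_left _ _))
  have hεb : |ε| ≤ 1/4096 := by
    rw [abs_of_pos hε0]; exact hεle.trans ((min_le_left _ _).trans (min_le_right _ _))
  have hεc : ε * (72 * M) ≤ max |t6| |t4| := by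
    rw [← le_div_iff₀ (by positivity)]; exact hεle.trans (min_le_right _ _)
  have hε1' : ε ≤ 1 := by rw [abs_of_pos hε0] at hεb; linarith
  obtain ⟨x, a, b, hx, hxC⟩ := H ε hε0 hεa
  set ψ : EA := EA.p0 G B + ε • EA.Dv x with hψ
  have C4 := H4 ε x hε0 hεb hxC
  have C6 := H6 ε x hε0 hεb hxC
  rw [← hψ] at C4 C6
  have hxn : ‖x‖ ≤ ‖x0‖ + C := by
    have : ‖x‖ ≤ ‖x0‖ + ‖x - x0‖ := norm_le_norm_add_norm_sub' x x0
    nlinarith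
  have hcont := EA.Fu_cont hεb ψ
  have hε3 : 0 ≤ ε^3 := by positivity
  have D6 : |coeff (EA.Fu ε ψ) 6 2 + (1/36) * t6 * ε^2| ≤ M * ε^3 := by
    have e : coeff (EA.Fu ε ψ) 6 2 + (1/36) * t6 * ε^2 =
      coeff (EA.Fu ε ψ) 6 2 - -((1/36) * t6) * ε^2 := by ring
    rw [e]
    exact C6.trans (mul_le_mul_of_nonneg_right hM6' hε3)
  have D4 : |coeff (EA.Fu ε ψ) 4 2 + (1/14) * t4 * ε^2| ≤ M * ε^3 := by
    have e : coeff (EA.Fu ε ψ) 4 2 + (1/14) * t4 * ε^2 =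
      coeff (EA.Fu ε ψ) 4 2 - -((1/14) * t4) * ε^2 := by ring
    rw [e]
    exact C4.trans (mul_le_mul_of_nonneg_right hM4' hε3)
  have hnt : SphNontrivial (EA.Fu ε ψ) := by
    have hbig := fun t c => big_aux (t := t) (c := c) (M := M) hε0
    have hpos : 0 < ε * M := by positivity
    rcases le_total |t6| |t4| with hle | hle
    · rw [max_eq_right hle] at hεc
      refine nontriv hcont 4 (by norm_num) (hbig ((1/14) * t4) _ D4 ?_)
      rw [abs_mul, abs_of_pos (by norm_num : (0:ℝ) < 1/14)]; linarith
    · rw [max_eq_left hle] at hεc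
      refine nontriv hcont 6 (by norm_num) (hbig ((1/36) * t6) _ D6 ?_)
      rw [abs_mul, abs_of_pos (by norm_num : (0:ℝ) < 1/36)]; linarith
  refine ⟨EA.Fu ε ψ, fun s => 4 * 0 + (-6 * s + ε * (a * s + b * s^2 + q3 * s^3 + q4 * s^4)),
    EA.contDiff_Fu hεb ψ, EA.periodic_Fu ε ψ, ⟨1, one_pos, ?_⟩, ?_, ?_, ?_, ?_, ?_, nonzonal hnt, hnt⟩
  · refine lt_of_le_of_lt (gev_bd (K := 2 * Real.pi^2 * ‖ψ‖) ?_) ENNReal.ofReal_lt_top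
    intro n m hm
    have := EA.coeff_Fu_bd hεb n m hm ψ
    refine this.trans (le_of_eq ?_)
    ring
  · intro s; fun_prop
  · intro θ hθ φ
    have hs : Real.sin θ ≠ 0 := (Real.sin_pos_of_pos_of_lt_pi hθ.1 hθ.2).ne'
    have h1 := EA.lap_main hεb (EA.p0 G B) x θ φ hs ε
    rw [EA.lap_p0 hεb G B θ φ hs, hx, ← hψ] at h1
    have hm : ∀ k : ℕ, EA.ev ε hεb θ φ (ψ^(k+1)) = (EA.Fu ε ψ θ φ)^(k+1) := by
      intro k
      induction k with
      | zero => rw [zero_add, pow_one, pow_one]; rfl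
      | succ k ih => rw [pow_succ, EA.ev_mul, ih, pow_succ _ (k+1)]; rfl
    have e2 := hm 1
    have e3 := hm 2
    have e4 := hm 3
    norm_num at e2 e3 e4
    simp only [map_add, map_smul, smul_eq_mul, e2, e3, e4, EA.ev_apply] at h1
    rw [Y10]
    linear_combination h1
  · have hgev := gev_bd (u := fun θ φ => β*Ynm 2 0 θ φ + γ*Ynm 1 0 θ φ - EA.Fu ε ψ θ φ) (K := ε * Kg) ?_
    · refine hgev.trans (ENNReal.ofReal_le_ofReal ?_)
      have e1 : gevC * (ε * Kg)^2 = (Real.sqrt gevC * Kg * ε)^2 := by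
        linear_combination (-(Kg^2 * ε^2)) * Real.sq_sqrt hgC
      rw [e1]
      have : Real.sqrt gevC * Kg ≤ M := by rw [hM]; linarith
      gcongr
    · intro n m hm
      have e1 : (fun θ φ => β*Ynm 2 0 θ φ + γ*Ynm 1 0 θ φ - EA.Fu ε ψ θ φ) =
          EA.Fu ε (-(EA.e (0,1)) - ε • EA.Dv x) := by
        ext θ φ
        rw [Y20, Y10, ← EA.ev_apply hεb, ← EA.ev_apply hεb, hψ, EA.p0, EA.W]
        simp only [map_add, map_sub, map_neg, map_smul, EA.ev_p0, hG, hB]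
        ring
      rw [e1, ← EA.coC_apply hεb n m hm, map_sub, map_neg, map_smul, EA.coC_e, EA.coC_apply]
      have g1 := EA.coeff_mono_bd hεb 0 1 n m hm
      have g2 := EA.coeff_Fu_bd hεb n m hm (EA.Dv x)
      have g3 := (EA.Dv_norm x).trans hxn
      rw [pow_one, abs_of_pos hε0] at g1
      have hP : 0 ≤ ((n:ℝ)+1) / 8^n * (2 * Real.pi^2) := by positivity
      have g4 : |coeff (EA.Fu ε (EA.Dv x)) n m| ≤ ((n:ℝ)+1) / 8^n * (2 * Real.pi^2) * (‖x0‖ + C) :=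
        g2.trans (mul_le_mul_of_nonneg_left g3 hP)
      refine (abs_sub _ _).trans ?_
      rw [abs_neg, smul_eq_mul, abs_mul, abs_of_pos hε0]
      calc _ ≤ 4096 * ε * (((n:ℝ)+1) / 8^n * (2 * Real.pi^2)) +
            ε * (((n:ℝ)+1) / 8^n * (2 * Real.pi^2) * (‖x0‖ + C)) := by gcongr
        _ = _ := by rw [hKg]; ring
  · refine le_trans (le_of_eq ?_) D6
    congr 1; rw [ht6]; ring
  · refine le_trans (le_of_eq ?_) D4
    congr 1; rw [ht4]; ring
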